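/- arXiv:1612.03689 — 6 statements merged into one kernel-verified Lean document; each statement's English description precedes it below -/
import Mathlib

section
/- Let μ be a probability measure on ℝ of the form dμ(t) = 1_Ω(t) ρ(t) dt where Ω is an open interval on which ρ is continuous and positive. For any open subinterval I ⊂ Ω, the restricted (renormalized) probability measure μ|_I satisfies C_P(μ|_I) ≤ C_P(μ). Consequently the map I ↦ C_P(μ|_I) is non-decreasing with respect to inclusion of intervals. -/
open MeasureTheory Real Set

/-- Variance of `f` under `μ`, as `inf_a ∫ (f-a)^2 dμ`. -/
noncomputable def Var (μ : Measure ℝ) (f : ℝ → ℝ) : ℝ := ⨅ a : ℝ, ∫ x, (f x - a)^2 ∂μ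

/-- `μ` satisfies a Poincaré inequality with constant `C`, over test functions that are
differentiable on the supporting interval `s` with `f, f' ∈ L²(μ)`. -/
def PoincareOn (μ : Measure ℝ) (s : Set ℝ) (C : ℝ) : Prop :=
  ∀ f f' : ℝ → ℝ, (∀ x ∈ s, HasDerivAt f (f' x) x) →
    Integrable (fun x => (f x)^2) μ → Integrable (fun x => (f' x)^2) μ →
    Var μ f ≤ C * ∫ x, (f' x)^2 ∂μ

/-- The optimal Poincaré constant of `μ` on the interval `s`. -/
noncomputable def CP (μ : Measure ℝ) (s : Set ℝ) : ℝ := sInf {C | 0 ≤ C ∧ PoincareOn μ s C}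

theorem Var_eq_of_memLp {ν : Measure ℝ} [IsFiniteMeasure ν] {f : ℝ → ℝ} (hf : MemLp f 2 ν) :
    Var ν f = ∫ x, (f x)^2 ∂ν - (∫ x, f x ∂ν)^2 / ν.real univ := by
  have hf1 : Integrable f ν := hf.integrable (by norm_num)
  have hf2 : Integrable (fun x => (f x)^2) ν := hf.integrable_sq
  have expand (a : ℝ) : ∫ x, (f x - a)^2 ∂ν =
      ∫ x, (f x)^2 ∂ν - 2 * a * ∫ x, f x ∂ν + a^2 * ν.real univ := by
    have h : ∀ x, (f x - a)^2 = ((f x)^2 - (2 * a) * f x) + a^2 := fun x => by ring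
    simp_rw [h]
    rw [integral_add (f := fun x => (f x)^2 - 2 * a * f x) (hf2.sub (hf1.const_mul _))
        (integrable_const _),
      integral_sub hf2 (hf1.const_mul _), integral_const_mul, integral_const, smul_eq_mul]
    ring
  unfold Var
  simp_rw [expand]
  rcases eq_or_ne (ν.real univ) 0 with h0 | h0
  · have hν : ν = 0 := by
      rwa [measureReal_eq_zero_iff, Measure.measure_univ_eq_zero] at h0
    simp [hν]
  · have hpos : 0 < ν.real univ := lt_of_le_of_ne measureReal_nonneg h0.symm
    have key (a : ℝ) : ∫ x, (f x)^2 ∂ν - 2 * a * ∫ x, f x ∂ν + a^2 * ν.real univ =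
        ∫ x, (f x)^2 ∂ν - (∫ x, f x ∂ν)^2 / ν.real univ +
          ν.real univ * (a - (∫ x, f x ∂ν) / ν.real univ)^2 := by
      field_simp
      ring
    simp_rw [key]
    apply le_antisymm
    · refine (ciInf_le ⟨∫ x, (f x)^2 ∂ν - (∫ x, f x ∂ν)^2 / ν.real univ, ?_⟩
        ((∫ x, f x ∂ν) / ν.real univ)).trans (by simp)
      rintro _ ⟨a, rfl⟩
      exact le_add_of_nonneg_right (by positivity)
    · exact le_ciInf fun a => le_add_of_nonneg_right (by positivity)

theorem bddBelow_range_integral_sub_sq (μ : Measure ℝ) (f : ℝ → ℝ) :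
    BddBelow (range fun a : ℝ => ∫ x, (f x - a)^2 ∂μ) :=
  ⟨0, by rintro _ ⟨a, rfl⟩; exact integral_nonneg fun x => sq_nonneg _⟩

theorem Var_smul_measure (c : ENNReal) (μ : Measure ℝ) (f : ℝ → ℝ) :
    Var (c • μ) f = c.toReal * Var μ f := by
  simp only [Var, integral_smul_measure, smul_eq_mul]
  exact (Real.mul_iInf_of_nonneg ENNReal.toReal_nonneg _).symm

/-- The extension of `f` from `[a, b]` to `ℝ` by rescaled arctangents with the slopes of `f` at
the endpoints. -/
noncomputable def arctanExtension (f f' : ℝ → ℝ) (a b k x : ℝ) : ℝ :=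
  if x < a then f a + f' a * (arctan (k * (x - a)) / k)
  else if x ≤ b then f x else f b + f' b * (arctan (k * (x - b)) / k)

/-- The derivative of `arctanExtension`. -/
noncomputable def arctanExtensionDeriv (f' : ℝ → ℝ) (a b k x : ℝ) : ℝ :=
  if x < a then f' a * (1 / (1 + (k * (x - a))^2))
  else if x ≤ b then f' x else f' b * (1 / (1 + (k * (x - b))^2))

theorem hasDerivAt_arctan_mul_div {k : ℝ} (hk : 0 < k) (c d y x : ℝ) :
    HasDerivAt (fun x => d + y * (arctan (k * (x - c)) / k))
      (y * (1 / (1 + (k * (x - c))^2))) x := by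
  have h1 : HasDerivAt (fun x => k * (x - c)) (k * 1) x :=
    ((hasDerivAt_id x).sub_const c).const_mul k
  have h2 := ((h1.arctan.div_const k).const_mul y).const_add d
  have e : y * (1 / (1 + (k * (x - c))^2) * (k * 1) / k) = y * (1 / (1 + (k * (x - c))^2)) := by
    rw [mul_one, mul_div_cancel_right₀ _ hk.ne']
  rwa [e] at h2

theorem hasDerivAt_arctanExtension {f f' : ℝ → ℝ} {a b k : ℝ} (hab : a ≤ b) (hk : 0 < k)
    (hf : ∀ x ∈ Icc a b, HasDerivAt f (f' x) x) (x : ℝ) :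
    HasDerivAt (arctanExtension f f' a b k) (arctanExtensionDeriv f' a b k x) x := by
  have hA := hasDerivAt_arctan_mul_div hk a (f a) (f' a) x
  have hB := hasDerivAt_arctan_mul_div hk b (f b) (f' b) x
  have eA : ∀ y ≤ a, arctanExtension f f' a b k y =
      f a + f' a * (arctan (k * (y - a)) / k) := by
    intro y hy
    rcases hy.lt_or_eq with h | rfl
    · simp [arctanExtension, h]
    · simp [arctanExtension, hab]
  have eI : ∀ y ∈ Icc a b, arctanExtension f f' a b k y = f y := fun y hy => by
    simp [arctanExtension, hy.1.not_gt, hy.2]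
  have eB : ∀ y, b ≤ y → arctanExtension f f' a b k y =
      f b + f' b * (arctan (k * (y - b)) / k) := by
    intro y hy
    rcases hy.lt_or_eq with h | rfl
    · simp [arctanExtension, h.not_ge, (hab.trans hy).not_gt]
    · simp [arctanExtension, hab.not_gt]
  have wA : x ≤ a → HasDerivWithinAt (arctanExtension f f' a b k)
      (arctanExtensionDeriv f' a b k x) (Iic a) x := by
    intro hx
    refine HasDerivWithinAt.congr ?_ eA (eA x hx)
    convert hA.hasDerivWithinAt using 1
    rcases hx.lt_or_eq with h | rfl
    · simp [arctanExtensionDeriv, h]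
    · simp [arctanExtensionDeriv, hab]
  have wI : x ∈ Icc a b → HasDerivWithinAt (arctanExtension f f' a b k)
      (arctanExtensionDeriv f' a b k x) (Icc a b) x := by
    intro hx
    refine HasDerivWithinAt.congr ?_ eI (eI x hx)
    convert (hf x hx).hasDerivWithinAt using 1
    simp [arctanExtensionDeriv, hx.1.not_gt, hx.2]
  have wB : b ≤ x → HasDerivWithinAt (arctanExtension f f' a b k)
      (arctanExtensionDeriv f' a b k x) (Ici b) x := by
    intro hx
    refine HasDerivWithinAt.congr ?_ eB (eB x hx)
    convert hB.hasDerivWithinAt using 1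
    rcases hx.lt_or_eq with h | rfl
    · simp [arctanExtensionDeriv, h.not_ge, (hab.trans hx).not_gt]
    · simp [arctanExtensionDeriv, hab.not_gt]
  -- outside the closure of a piece the derivative within that piece is unconstrained
  have wA' : HasDerivWithinAt (arctanExtension f f' a b k)
      (arctanExtensionDeriv f' a b k x) (Iic a) x := by
    by_cases h : x ≤ a
    · exact wA h
    · exact hasDerivWithinAt_iff_hasFDerivWithinAt.2 (.of_notMem_closure (by simpa using h))
  have wI' : HasDerivWithinAt (arctanExtension f f' a b k)
      (arctanExtensionDeriv f' a b k x) (Icc a b) x := by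
    by_cases h : x ∈ Icc a b
    · exact wI h
    · exact hasDerivWithinAt_iff_hasFDerivWithinAt.2 (.of_notMem_closure (by rwa [closure_Icc]))
  have wB' : HasDerivWithinAt (arctanExtension f f' a b k)
      (arctanExtensionDeriv f' a b k x) (Ici b) x := by
    by_cases h : b ≤ x
    · exact wB h
    · exact hasDerivWithinAt_iff_hasFDerivWithinAt.2 (.of_notMem_closure (by simpa using h))
  have h := (wA'.union wI').union wB'
  rwa [Iic_union_Icc_eq_Iic hab, Iic_union_Ici, hasDerivWithinAt_univ] at h

theorem integrable_arctanExtension_sq {μ : Measure ℝ} [IsFiniteMeasure μ] {f f' : ℝ → ℝ}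
    {a b k : ℝ} (hab : a ≤ b) (hk : 0 < k) (hf : ∀ x ∈ Icc a b, HasDerivAt f (f' x) x) (c : ℝ) :
    Integrable (fun x => (arctanExtension f f' a b k x - c)^2) μ := by
  have hcont : Continuous (arctanExtension f f' a b k) :=
    continuous_iff_continuousAt.2 fun x => (hasDerivAt_arctanExtension hab hk hf x).continuousAt
  have hfc : ContinuousOn f (Icc a b) := fun x hx => (hf x hx).continuousAt.continuousWithinAt
  obtain ⟨M, hM⟩ := isCompact_Icc.exists_bound_of_continuousOn hfc
  have hat (t : ℝ) : |arctan t / k| ≤ (π / 2) / k := by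
    rw [abs_div, abs_of_pos hk]
    gcongr
    exact abs_le.2 ⟨(neg_pi_div_two_lt_arctan t).le, (arctan_lt_pi_div_two t).le⟩
  have hM0 : 0 ≤ M := (norm_nonneg _).trans (hM a (left_mem_Icc.2 hab))
  have hend (y z t : ℝ) (hy : |y| ≤ M) : |y + z * (arctan t / k)| ≤ M + |z| * ((π / 2) / k) := by
    refine (abs_add_le _ _).trans ?_
    rw [abs_mul]
    gcongr
    exact hat t
  have hfa : |f a| ≤ M := hM a (left_mem_Icc.2 hab)
  have hfb : |f b| ≤ M := hM b (right_mem_Icc.2 hab)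
  set B := M + |f' a| * ((π / 2) / k) + |f' b| * ((π / 2) / k) with hB
  have hπ : 0 ≤ (π / 2) / k := by positivity
  have ha0 := mul_nonneg (abs_nonneg (f' a)) hπ
  have hb0 := mul_nonneg (abs_nonneg (f' b)) hπ
  have hbd (x : ℝ) : |arctanExtension f f' a b k x| ≤ B := by
    unfold arctanExtension
    split_ifs with h1 h2
    · linarith [hend (f a) (f' a) (k * (x - a)) hfa]
    · have : |f x| ≤ M := hM x ⟨not_lt.1 h1, h2⟩
      linarith
    · linarith [hend (f b) (f' b) (k * (x - b)) hfb]
  refine Integrable.of_bound (C := (B + |c|)^2)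
    ((hcont.sub continuous_const).pow 2).aestronglyMeasurable (Filter.Eventually.of_forall fun x => ?_)
  rw [Real.norm_eq_abs, abs_of_nonneg (sq_nonneg _), ← sq_abs]
  gcongr
  exact (abs_sub _ _).trans (by linarith [hbd x])

theorem tendsto_setIntegral_sq_of_arctan_slope (μ : Measure ℝ) [IsFiniteMeasure μ] {s : Set ℝ}
    (hs : MeasurableSet s) (c y : ℝ) (hc : c ∉ s) :
    Filter.Tendsto (fun n : ℕ => ∫ x in s, (y * (1 / (1 + (((n : ℝ) + 1) * (x - c))^2)))^2 ∂μ)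
      Filter.atTop (nhds 0) := by
  have h := tendsto_integral_of_dominated_convergence (μ := μ.restrict s)
    (F := fun (n : ℕ) x => (y * (1 / (1 + (((n : ℝ) + 1) * (x - c))^2)))^2) (f := fun _ => 0)
    (fun _ => y^2) ?_ (integrable_const _) ?_ ?_
  · simpa using h
  · intro n
    apply Measurable.aestronglyMeasurable
    fun_prop
  · refine fun n => Filter.Eventually.of_forall fun x => ?_
    rw [Real.norm_eq_abs, abs_of_nonneg (sq_nonneg _), mul_pow]
    refine mul_le_of_le_one_right (sq_nonneg _) (pow_le_one₀ (by positivity) ?_)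
    rw [div_le_one (by positivity)]
    exact le_add_of_nonneg_right (sq_nonneg _)
  · filter_upwards [ae_restrict_mem hs] with x hx
    have hxc : x - c ≠ 0 := sub_ne_zero.2 fun h => hc (h ▸ hx)
    have h1 : Filter.Tendsto (fun n : ℕ => ((n : ℝ) + 1)^2) Filter.atTop Filter.atTop :=
      (Filter.tendsto_pow_atTop two_ne_zero).comp
        (Filter.tendsto_atTop_add_const_right _ _ tendsto_natCast_atTop_atTop)
    have h2 : Filter.Tendsto (fun n : ℕ => 1 + ((n : ℝ) + 1)^2 * (x - c)^2)
        Filter.atTop Filter.atTop :=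
      Filter.tendsto_atTop_add_const_left _ _ (h1.atTop_mul_const (by positivity))
    have h3 := ((h2.inv_tendsto_atTop).const_mul y).pow 2
    simp only [mul_zero, ne_eq, OfNat.ofNat_ne_zero, not_false_eq_true, zero_pow] at h3
    refine h3.congr fun n => ?_
    simp [mul_pow]

theorem PoincareOn.Var_restrict_Icc_le {μ : Measure ℝ} [IsFiniteMeasure μ] {s : Set ℝ} {C : ℝ}
    (h : PoincareOn μ s C) {f f' : ℝ → ℝ} {a b : ℝ} (hab : a ≤ b)
    (hf : ∀ x ∈ Icc a b, HasDerivAt f (f' x) x)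
    (hf' : IntegrableOn (fun x => (f' x)^2) (Icc a b) μ) :
    Var (μ.restrict (Icc a b)) f ≤ C * ∫ x in Icc a b, (f' x)^2 ∂μ := by
  have slope (s : Set ℝ) (c y k : ℝ) :
      IntegrableOn (fun x => (y * (1 / (1 + (k * (x - c))^2)))^2) s μ := by
    refine Integrable.of_bound (C := y^2) (Measurable.aestronglyMeasurable (by fun_prop))
      (Filter.Eventually.of_forall fun x => ?_)
    rw [Real.norm_eq_abs, abs_of_nonneg (sq_nonneg _), mul_pow]
    refine mul_le_of_le_one_right (sq_nonneg _) (pow_le_one₀ (by positivity) ?_)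
    rw [div_le_one (by positivity)]
    exact le_add_of_nonneg_right (sq_nonneg _)
  have eA (k : ℝ) : EqOn (fun x => (f' a * (1 / (1 + (k * (x - a))^2)))^2)
      (fun x => (arctanExtensionDeriv f' a b k x)^2) (Iio a) := fun x hx => by
    simp [arctanExtensionDeriv, mem_Iio.1 hx]
  have eI (k : ℝ) : EqOn (fun x => (f' x)^2)
      (fun x => (arctanExtensionDeriv f' a b k x)^2) (Icc a b) := fun x hx => by
    simp [arctanExtensionDeriv, hx.1.not_gt, hx.2]
  have eB (k : ℝ) : EqOn (fun x => (f' b * (1 / (1 + (k * (x - b))^2)))^2)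
      (fun x => (arctanExtensionDeriv f' a b k x)^2) (Ioi b) := fun x hx => by
    simp [arctanExtensionDeriv, (mem_Ioi.1 hx).not_ge, (hab.trans (mem_Ioi.1 hx).le).not_gt]
  have iA (k : ℝ) := (slope (Iio a) a (f' a) k).congr_fun (eA k) measurableSet_Iio
  have iI (k : ℝ) := hf'.congr_fun (eI k) measurableSet_Icc
  have iB (k : ℝ) := (slope (Ioi b) b (f' b) k).congr_fun (eB k) measurableSet_Ioi
  have hcover : Iio a ∪ Icc a b ∪ Ioi b = univ := by
    rw [Iio_union_Icc_eq_Iic hab, Iic_union_Ioi]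
  have hd1 : Disjoint (Iio a) (Icc a b) :=
    Set.disjoint_left.2 fun x hx hx' => hx'.1.not_gt hx
  have hd2 : Disjoint (Iio a ∪ Icc a b) (Ioi b) := by
    rw [Iio_union_Icc_eq_Iic hab]
    exact Set.disjoint_left.2 fun x hx hx' => not_lt.2 (mem_Iic.1 hx) hx'
  have hint (k : ℝ) : Integrable (fun x => (arctanExtensionDeriv f' a b k x)^2) μ := by
    rw [← integrableOn_univ, ← hcover]
    exact ((iA k).union (iI k)).union (iB k)
  have hval (k : ℝ) : ∫ x, (arctanExtensionDeriv f' a b k x)^2 ∂μ =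
      (∫ x in Iio a, (f' a * (1 / (1 + (k * (x - a))^2)))^2 ∂μ) + (∫ x in Icc a b, (f' x)^2 ∂μ) +
        ∫ x in Ioi b, (f' b * (1 / (1 + (k * (x - b))^2)))^2 ∂μ := by
    rw [← setIntegral_univ, ← hcover,
      setIntegral_union hd2 measurableSet_Ioi ((iA k).union (iI k)) (iB k),
      setIntegral_union hd1 measurableSet_Icc (iA k) (iI k),
      setIntegral_congr_fun measurableSet_Iio (eA k), setIntegral_congr_fun measurableSet_Icc (eI k),
      setIntegral_congr_fun measurableSet_Ioi (eB k)]
  have hle (n : ℕ) : Var (μ.restrict (Icc a b)) f ≤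
      C * ∫ x, (arctanExtensionDeriv f' a b ((n : ℝ) + 1) x)^2 ∂μ := by
    have hk : (0 : ℝ) < (n : ℝ) + 1 := by positivity
    refine le_trans ?_ (h (arctanExtension f f' a b ((n : ℝ) + 1)) _
      (fun x _ => hasDerivAt_arctanExtension hab hk hf x)
      (by simpa using integrable_arctanExtension_sq (μ := μ) hab hk hf 0) (hint _))
    refine ciInf_mono (bddBelow_range_integral_sub_sq _ _) fun c => ?_
    have hE : ∫ x in Icc a b, (f x - c)^2 ∂μ =
        ∫ x in Icc a b, (arctanExtension f f' a b ((n : ℝ) + 1) x - c)^2 ∂μ := by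
      refine setIntegral_congr_fun measurableSet_Icc fun x hx => ?_
      simp [arctanExtension, hx.1.not_gt, hx.2]
    rw [hE]
    exact setIntegral_le_integral (integrable_arctanExtension_sq hab hk hf c)
      (Filter.Eventually.of_forall fun x => sq_nonneg _)
  refine ge_of_tendsto' (x := Filter.atTop) ?_ hle
  simp_rw [hval]
  have t1 := tendsto_setIntegral_sq_of_arctan_slope μ measurableSet_Iio a (f' a) self_notMem_Iio
  have t2 := tendsto_setIntegral_sq_of_arctan_slope μ measurableSet_Ioi b (f' b) self_notMem_Ioi
  simpa using ((t1.add_const (∫ x in Icc a b, (f' x)^2 ∂μ)).add t2).const_mul C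

theorem Set.OrdConnected.exists_seq_Icc {I : Set ℝ} (hI : I.OrdConnected) (ho : IsOpen I)
    (hne : I.Nonempty) : ∃ a b : ℕ → ℝ, (∀ n, a n ≤ b n) ∧ (∀ n, Icc (a n) (b n) ⊆ I) ∧
      ∀ x ∈ I, ∀ᶠ n in Filter.atTop, x ∈ Icc (a n) (b n) := by
  obtain ⟨x₀, hx₀⟩ := hne
  have : LocallyCompactSpace I := ho.locallyCompactSpace
  let K : CompactExhaustion I := default
  let S (n : ℕ) : Set ℝ := insert x₀ ((↑) '' K n)
  have hS (n : ℕ) : IsCompact (S n) := ((K.isCompact n).image continuous_subtype_val).insert x₀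
  have hSI (n : ℕ) : S n ⊆ I := insert_subset hx₀ (by rintro _ ⟨x, -, rfl⟩; exact x.2)
  have hSn (n : ℕ) : (S n).Nonempty := insert_nonempty _ _
  refine ⟨fun n => sInf (S n), fun n => sSup (S n), fun n => ?_, fun n => ?_, fun x hx => ?_⟩
  · exact csInf_le_csSup (hSn n) (hS n).bddBelow (hS n).bddAbove
  · exact hI.out (hSI n ((hS n).sInf_mem (hSn n))) (hSI n ((hS n).sSup_mem (hSn n)))
  · obtain ⟨N, hN⟩ := K.exists_mem ⟨x, hx⟩
    filter_upwards [Filter.eventually_ge_atTop N] with n hn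
    have hxS : x ∈ S n := mem_insert_of_mem _ ⟨⟨x, hx⟩, K.subset hn hN, rfl⟩
    exact ⟨csInf_le (hS n).bddBelow hxS, le_csSup (hS n).bddAbove hxS⟩

theorem tendsto_setIntegral_of_eventually_mem {μ : Measure ℝ} {I : Set ℝ} (hI : MeasurableSet I)
    {K : ℕ → Set ℝ} (hK : ∀ n, MeasurableSet (K n)) (hKI : ∀ n, K n ⊆ I)
    (hmem : ∀ x ∈ I, ∀ᶠ n in Filter.atTop, x ∈ K n) {g : ℝ → ℝ} (hg : IntegrableOn g I μ) :
    Filter.Tendsto (fun n => ∫ x in K n, g x ∂μ) Filter.atTop (nhds (∫ x in I, g x ∂μ)) := by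
  have hcov : AECover (μ.restrict I) Filter.atTop K :=
    ⟨(ae_restrict_mem hI).mono fun x hx => hmem x hx, hK⟩
  refine (hcov.integral_tendsto_of_countably_generated hg).congr fun n => ?_
  rw [Measure.restrict_restrict (hK n), inter_eq_left.2 (hKI n)]

theorem PoincareOn.Var_restrict_le {μ : Measure ℝ} [IsFiniteMeasure μ] {s I : Set ℝ} {C : ℝ}
    (h : PoincareOn μ s C) (hC : 0 ≤ C) (ho : IsOpen I) (hI : I.OrdConnected) (hne : I.Nonempty)
    {f f' : ℝ → ℝ} (hf : ∀ x ∈ I, HasDerivAt f (f' x) x)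
    (hf2 : IntegrableOn (fun x => (f x)^2) I μ) (hf'2 : IntegrableOn (fun x => (f' x)^2) I μ) :
    Var (μ.restrict I) f ≤ C * ∫ x in I, (f' x)^2 ∂μ := by
  rcases eq_or_ne (μ.real I) 0 with h0 | h0
  · have hz : μ.restrict I = 0 := by
      rwa [measureReal_eq_zero_iff, ← Measure.restrict_eq_zero] at h0
    simp [Var, hz]
  obtain ⟨a, b, hab, habI, hmem⟩ := hI.exists_seq_Icc ho hne
  have hfc : ContinuousOn f I := fun x hx => (hf x hx).continuousAt.continuousWithinAt
  have hL : MemLp f 2 (μ.restrict I) :=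
    (memLp_two_iff_integrable_sq (hfc.aestronglyMeasurable ho.measurableSet)).2 hf2
  have hLn (n : ℕ) : MemLp f 2 (μ.restrict (Icc (a n) (b n))) :=
    hL.mono_measure (Measure.restrict_mono_set μ (habI n))
  have hle (n : ℕ) : Var (μ.restrict (Icc (a n) (b n))) f ≤ C * ∫ x in I, (f' x)^2 ∂μ := by
    refine (h.Var_restrict_Icc_le (hab n) (fun x hx => hf x (habI n hx))
      (hf'2.mono_set (habI n))).trans (mul_le_mul_of_nonneg_left ?_ hC)
    exact setIntegral_mono_set hf'2 (Filter.Eventually.of_forall fun x => sq_nonneg _)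
      (habI n).eventuallyLE
  refine le_of_tendsto' (x := Filter.atTop) ?_ hle
  have tend {g : ℝ → ℝ} (hg : IntegrableOn g I μ) :=
    tendsto_setIntegral_of_eventually_mem ho.measurableSet (fun _ => measurableSet_Icc) habI hmem hg
  have hm := tend (g := fun _ => 1) (integrable_const _)
  simp only [setIntegral_const, smul_eq_mul, mul_one] at hm
  simp_rw [fun n => Var_eq_of_memLp (hLn n), Var_eq_of_memLp hL, measureReal_restrict_apply_univ]
  exact (tend hf2).sub (((tend (hL.integrable (by norm_num))).pow 2).div hm h0)

theorem PoincareOn.cond {μ : Measure ℝ} [IsFiniteMeasure μ] {s I : Set ℝ} {C : ℝ}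
    (h : PoincareOn μ s C) (hC : 0 ≤ C) (ho : IsOpen I) (hI : I.OrdConnected) :
    PoincareOn ((μ I)⁻¹ • μ.restrict I) I C := by
  intro f f' hf hf2 hf'2
  rcases eq_or_ne (μ I) 0 with h0 | h0
  · simp [Var, Measure.restrict_eq_zero.2 h0]
  have hne : I.Nonempty := nonempty_of_measure_ne_zero h0
  have hc : (μ I)⁻¹ ≠ 0 := ENNReal.inv_ne_zero.2 (measure_ne_top μ I)
  have hc' : (μ I)⁻¹ ≠ ⊤ := ENNReal.inv_ne_top.2 h0
  rw [integrable_smul_measure hc hc'] at hf2 hf'2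
  rw [Var_smul_measure, integral_smul_measure, smul_eq_mul, mul_left_comm]
  exact mul_le_mul_of_nonneg_left (h.Var_restrict_le hC ho hI hne hf hf2 hf'2)
    ENNReal.toReal_nonneg

/-- the Poincaré constant cannot increase by restriction to a subinterval,
and the map `I ↦ C_P(μ|_I)` is non-decreasing. -/
theorem stmt3 (Ω : Set ℝ) (hΩo : IsOpen Ω) (hΩc : Ω.OrdConnected) (hΩne : Ω.Nonempty)
    (ρ : ℝ → ℝ) (hc : ContinuousOn ρ Ω) (hpos : ∀ x ∈ Ω, 0 < ρ x) (h0 : ∀ x ∉ Ω, ρ x = 0)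
    (μ : Measure ℝ) (hμ : μ = MeasureTheory.volume.withDensity fun t => ENNReal.ofReal (ρ t))
    [IsProbabilityMeasure μ]
    (hCP : PoincareOn μ Ω (CP μ Ω)) :
    (∀ I : Set ℝ, IsOpen I → I.OrdConnected → I.Nonempty → I ⊆ Ω →
      CP ((μ I)⁻¹ • μ.restrict I) I ≤ CP μ Ω) ∧
    (∀ I J : Set ℝ, IsOpen I → I.OrdConnected → I.Nonempty →
      IsOpen J → J.OrdConnected → I ⊆ J → J ⊆ Ω →
      CP ((μ I)⁻¹ • μ.restrict I) I ≤ CP ((μ J)⁻¹ • μ.restrict J) J) := by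
  have hC : 0 ≤ CP μ Ω := Real.sInf_nonneg fun _ hC => hC.1
  refine ⟨fun I ho hI _ _ => csInf_le ⟨0, fun _ hC => hC.1⟩ ⟨hC, hCP.cond hC ho hI⟩, ?_⟩
  intro I J hIo hI _ hJo hJ hIJ _
  refine csInf_le_csInf ⟨0, fun _ hC => hC.1⟩ ⟨_, hC, hCP.cond hC hJo hJ⟩ ?_
  rintro C ⟨hC0, hCJ⟩
  have : IsFiniteMeasure ((μ J)⁻¹ • μ.restrict J) :=
    inferInstanceAs (IsFiniteMeasure (ProbabilityTheory.cond μ J))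
  have key := hCJ.cond hC0 hIo hI
  have hcond := ProbabilityTheory.cond_cond_eq_cond_inter (μ := μ) hJo.measurableSet
    hIo.measurableSet
  rw [inter_eq_right.2 hIJ] at hcond
  refine ⟨hC0, ?_⟩
  rw [← ProbabilityTheory.cond, ← hcond]
  exact key
end

section
/- Let dμ(x) = 1_{(−b,b)}(x) e^{−V(x)} dx be an even probability measure with V continuous. Let φ: (−b,b) → ℝ⁺ be an even function, non-increasing on [0,b), such that dμ̃ = φ dμ is a probability measure. Then C_P(μ̃) ≤ C_P(μ). -/
open MeasureTheory Real Set

open scoped ENNReal Topology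

lemma integral_sq_le_Var_of_odd {μ : Measure ℝ} [IsProbabilityMeasure μ] [μ.IsNegInvariant]
    {g : ℝ → ℝ} (hodd : ∀ x, g (-x) = -g x) (hg : MemLp g 2 μ) :
    ∫ x, (g x) ^ 2 ∂μ ≤ Var μ g := by
  have h1 : Integrable g μ := hg.integrable (by norm_num)
  have h2 : Integrable (fun x => (g x) ^ 2) μ := hg.integrable_sq
  have h0 : ∫ x, g x ∂μ = 0 := by
    have h := integral_neg_eq_self g μ
    simp only [hodd, integral_neg] at h
    linarith
  refine le_ciInf fun a => ?_
  have hexp : ∀ x, (g x - a) ^ 2 = ((g x) ^ 2 - 2 * a * g x) + a ^ 2 := fun x => by ring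
  simp only [hexp]
  have h3 : Integrable (fun x => 2 * a * g x) μ := h1.const_mul _
  have h4 : Integrable (fun x => (g x) ^ 2 - 2 * a * g x) μ := h2.sub h3
  rw [integral_add h4 (integrable_const _), integral_sub h2 h3, integral_const_mul, h0]
  simp only [integral_const, probReal_univ, smul_eq_mul]
  nlinarith [sq_nonneg a]

lemma continuous_mul_of_tsupport_subset {g χ : ℝ → ℝ} {s : Set ℝ}
    (hg : ∀ x ∈ s, ContinuousAt g x) (hχ : Continuous χ) (hs : tsupport χ ⊆ s) :
    Continuous fun x => g x * χ x :=
  continuous_of_tsupport fun x hx =>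
    (hg x (hs (tsupport_mul_subset_right hx))).mul hχ.continuousAt

/-- The cut-off of an odd function `g` by an even bump `χ`, with derivative `g' * χ`. -/
lemma exists_odd_truncation {b r R : ℝ} {g g' : ℝ → ℝ}
    (hodd : ∀ x, g (-x) = -g x) (hderiv : ∀ x ∈ Ioo (-b) b, HasDerivAt g (g' x) x)
    (hr : 0 < r) (hrR : r < R) (hRb : R < b) :
    ∃ G χ : ℝ → ℝ, Continuous G ∧ Continuous χ ∧ (∀ x, G (-x) = -G x) ∧
      (∀ x ∈ Ioo (-b) b, HasDerivAt G (g' x * χ x) x) ∧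
      (∀ x ∈ Icc (-r) r, G x = g x) ∧ (∀ x, 0 ≤ χ x ∧ χ x ≤ 1) ∧
      (∀ x, x ∉ Icc (-R) R → χ x = 0) ∧ ∃ M, ∀ x ∈ Ioo (-b) b, |G x| ≤ M := by
  let χ : ContDiffBump (0 : ℝ) := ⟨r, R, hr, hrR⟩
  have hχ' : Continuous (deriv χ) := (χ.contDiff (n := 1)).continuous_deriv le_rfl
  have hball : Metric.closedBall (0 : ℝ) R = Icc (-R) R := by
    rw [Real.closedBall_eq_Icc]; simp
  have hts : tsupport χ = Icc (-R) R := by rw [χ.tsupport_eq, ← hball]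
  have hsub : tsupport χ ⊆ Ioo (-b) b := by
    rw [hts]; exact fun x hx => ⟨by linarith [hx.1], by linarith [hx.2]⟩
  have hsub' : tsupport (deriv χ) ⊆ Ioo (-b) b :=
    (tsupport_deriv_subset (𝕜 := ℝ)).trans hsub
  have hgc : ∀ x ∈ Ioo (-b) b, ContinuousAt g x := fun x hx => (hderiv x hx).continuousAt
  have hk : Continuous fun x => g x * χ x :=
    continuous_mul_of_tsupport_subset hgc χ.continuous hsub
  have hh : Continuous fun x => g x * deriv χ x :=
    continuous_mul_of_tsupport_subset hgc hχ' hsub'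
  have hI : ∀ x, HasDerivAt (fun y => ∫ t in (0 : ℝ)..y, g t * deriv χ t) (g x * deriv χ x) x :=
    fun x => intervalIntegral.integral_hasDerivAt_right (hh.intervalIntegrable _ _)
      (hh.stronglyMeasurableAtFilter _ _) hh.continuousAt
  have hχeven : ∀ x, deriv χ (-x) = -deriv χ x := by
    intro x
    have h : deriv (fun y => χ (-y)) x = -deriv χ (-x) := deriv_comp_neg _ _
    have h2 : (fun y => χ (-y)) = χ := funext fun y => χ.neg y
    rw [h2] at h
    linarith
  obtain ⟨M₁, hM₁⟩ := hk.bounded_above_of_compact_support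
    (HasCompactSupport.mul_left χ.hasCompactSupport)
  obtain ⟨M₂, hM₂⟩ := hh.bounded_above_of_compact_support
    (HasCompactSupport.mul_left χ.hasCompactSupport.deriv)
  refine ⟨fun x => g x * χ x - ∫ t in (0 : ℝ)..x, g t * deriv χ t, χ, ?_, χ.continuous,
    ?_, ?_, ?_, fun x => ⟨χ.nonneg, χ.le_one⟩, ?_, M₁ + M₂ * b, ?_⟩
  · exact hk.sub (continuous_iff_continuousAt.2 fun x => (hI x).continuousAt)
  · intro x
    have h : ∫ t in (0 : ℝ)..(-x), g t * deriv χ t = -∫ t in (0 : ℝ)..x, g t * deriv χ t := by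
      have h := intervalIntegral.integral_comp_neg (a := 0) (b := x)
        (fun t => g t * deriv χ t)
      simp only [hodd, hχeven, neg_mul_neg, neg_zero] at h
      rw [intervalIntegral.integral_symm, ← h]
    simp only [h, hodd, χ.neg]
    ring
  · intro x hx
    have h := ((hderiv x hx).mul
      ((χ.contDiff (n := 1)).differentiable one_ne_zero x).hasDerivAt).sub (hI x)
    exact h.congr_deriv (by ring)
  · intro x hx
    have hone : ∀ y ∈ Icc (-r) r, χ y = 1 := fun y hy =>
      χ.one_of_mem_closedBall (by rw [Real.closedBall_eq_Icc]; simpa using hy)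
    have hz : ∀ y ∈ Ioo (-r) r, deriv χ y = 0 := by
      intro y hy
      have : χ =ᶠ[𝓝 y] fun _ => (1 : ℝ) := by
        filter_upwards [Ioo_mem_nhds hy.1 hy.2] with z hz
        exact hone z ⟨hz.1.le, hz.2.le⟩
      rw [this.deriv_eq]; simp
    have hz' : ∀ y ∈ Icc (-r) r, deriv χ y = 0 := by
      intro y hy
      have hcl : closure (Ioo (-r) r) ⊆ {y | deriv χ y = 0} :=
        closure_minimal hz (isClosed_eq hχ' continuous_const)
      rw [closure_Ioo (by linarith)] at hcl
      exact hcl hy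
    have : ∫ t in (0 : ℝ)..x, g t * deriv χ t = ∫ t in (0 : ℝ)..x, (0 : ℝ) := by
      refine intervalIntegral.integral_congr fun t ht => ?_
      have : t ∈ Icc (-r) r :=
        (convex_Icc (-r) r).ordConnected.uIcc_subset ⟨by linarith, hr.le⟩ hx ht
      simp [hz' t this]
    simp [this, hone x hx]
  · intro x hx
    rw [← hts] at hx
    exact image_eq_zero_of_notMem_tsupport hx
  · intro x hx
    have h2 : ‖∫ t in (0 : ℝ)..x, g t * deriv χ t‖ ≤ M₂ * |x - 0| :=
      intervalIntegral.norm_integral_le_of_norm_le_const fun t _ => hM₂ t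
    have h3 : |x - 0| ≤ b := by rw [sub_zero]; exact abs_le.2 ⟨hx.1.le, hx.2.le⟩
    have h4 : 0 ≤ M₂ := (norm_nonneg _).trans (hM₂ 0)
    have h5 := mul_le_mul_of_nonneg_left h3 h4
    rw [Real.norm_eq_abs] at h2
    exact (abs_sub _ _).trans (add_le_add (hM₁ x) (h2.trans h5))

lemma setLIntegral_sq_le_of_odd {μ : Measure ℝ} [IsProbabilityMeasure μ] [μ.IsNegInvariant]
    {b C : ℝ} (hμ : ∀ᵐ x ∂μ, x ∈ Ioo (-b) b) (hC : 0 ≤ C) (hP : PoincareOn μ (Ioo (-b) b) C)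
    {g g' : ℝ → ℝ} (hg' : Measurable g') (hodd : ∀ x, g (-x) = -g x)
    (hderiv : ∀ x ∈ Ioo (-b) b, HasDerivAt g (g' x) x)
    {r R : ℝ} (hr : 0 < r) (hrR : r < R) (hRb : R < b)
    (hfin : ∫⁻ x in Icc (-R) R, ENNReal.ofReal (g' x ^ 2) ∂μ ≠ ∞) :
    ∫⁻ x in Icc (-r) r, ENNReal.ofReal (g x ^ 2) ∂μ ≤
      ENNReal.ofReal C * ∫⁻ x in Icc (-R) R, ENNReal.ofReal (g' x ^ 2) ∂μ := by
  obtain ⟨G, χ, hG, hχ, hGodd, hGd, hGg, hχ1, hχ0, M, hM⟩ :=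
    exists_odd_truncation hodd hderiv hr hrR hRb
  have hGL : MemLp G 2 μ := by
    refine MemLp.of_bound hG.aestronglyMeasurable M ?_
    filter_upwards [hμ] with x hx using hM x hx
  have hle : ∫⁻ x, ENNReal.ofReal ((g' x * χ x) ^ 2) ∂μ ≤
      ∫⁻ x in Icc (-R) R, ENNReal.ofReal (g' x ^ 2) ∂μ := by
    rw [← lintegral_indicator measurableSet_Icc]
    refine lintegral_mono fun x => ?_
    by_cases hx : x ∈ Icc (-R) R
    · rw [indicator_of_mem hx]
      refine ENNReal.ofReal_le_ofReal ?_
      rw [mul_pow]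
      exact mul_le_of_le_one_right (sq_nonneg _) (pow_le_one₀ (hχ1 x).1 (hχ1 x).2)
    · simp [hχ0 x hx]
  have hmeas : Measurable fun x => (g' x * χ x) ^ 2 := (hg'.mul hχ.measurable).pow_const 2
  have hint : Integrable (fun x => (g' x * χ x) ^ 2) μ := by
    refine ⟨hmeas.aestronglyMeasurable, ?_⟩
    rw [hasFiniteIntegral_iff_ofReal (Filter.Eventually.of_forall fun x => sq_nonneg _)]
    exact hle.trans_lt hfin.lt_top
  have h := (integral_sq_le_Var_of_odd hGodd hGL).trans (hP G _ hGd hGL.integrable_sq hint)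
  calc ∫⁻ x in Icc (-r) r, ENNReal.ofReal (g x ^ 2) ∂μ
      = ∫⁻ x in Icc (-r) r, ENNReal.ofReal (G x ^ 2) ∂μ :=
        setLIntegral_congr_fun measurableSet_Icc fun x hx => by simp only [hGg x hx]
    _ ≤ ∫⁻ x, ENNReal.ofReal (G x ^ 2) ∂μ := setLIntegral_le_lintegral _ _
    _ = ENNReal.ofReal (∫ x, G x ^ 2 ∂μ) :=
        (ofReal_integral_eq_lintegral_ofReal hGL.integrable_sq
          (Filter.Eventually.of_forall fun x => sq_nonneg _)).symm
    _ ≤ ENNReal.ofReal (C * ∫ x, (g' x * χ x) ^ 2 ∂μ) := ENNReal.ofReal_le_ofReal h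
    _ = ENNReal.ofReal C * ∫⁻ x, ENNReal.ofReal ((g' x * χ x) ^ 2) ∂μ := by
        rw [ENNReal.ofReal_mul hC, ofReal_integral_eq_lintegral_ofReal hint
          (Filter.Eventually.of_forall fun x => sq_nonneg _)]
    _ ≤ _ := by gcongr

lemma measure_le_mul_of_symmetric {ν₁ ν₂ : Measure ℝ} [NullSingletonClass ν₁] {b : ℝ} {c : ℝ≥0∞}
    (h : ∀ r R, 0 < r → r < R → R < b → ν₂ (Icc (-R) R) ≠ ∞ →
      ν₁ (Icc (-r) r) ≤ c * ν₂ (Icc (-R) R))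
    {J : Set ℝ} (hJ : J ⊆ Ioo (-b) b) (hsymm : ∀ x ∈ J, ∀ y, |y| ≤ |x| → y ∈ J)
    (hfin : ν₂ J ≠ ∞) : ν₁ J ≤ c * ν₂ J := by
  rcases J.eq_empty_or_nonempty with rfl | hne
  · simp
  have hbdd : BddAbove (abs '' J) := by
    refine ⟨b, ?_⟩
    rintro _ ⟨x, hx, rfl⟩
    exact abs_le.2 ⟨(hJ hx).1.le, (hJ hx).2.le⟩
  set T := sSup (abs '' J) with hT
  have hle : ∀ x ∈ J, |x| ≤ T := fun x hx => le_csSup hbdd (mem_image_of_mem _ hx)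
  have hsub : J ⊆ Icc (-T) T := fun x hx => abs_le.1 (hle x hx)
  have hT0 : 0 ≤ T := (abs_nonneg _).trans (hle _ hne.some_mem)
  rcases hT0.eq_or_lt with h0 | hpos
  · have : ν₁ J = 0 := by
      refine measure_mono_null hsub ?_
      rw [← h0]
      simp
    simp [this]
  obtain ⟨u, hu, huT, hulim⟩ := exists_seq_strictMono_tendsto' hpos
  have hcover : Ioo (-T) T ⊆ ⋃ n, Icc (-u n) (u n) := by
    intro x hx
    obtain ⟨n, hn⟩ := (hulim.eventually (lt_mem_nhds (abs_lt.2 hx))).exists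
    exact mem_iUnion.2 ⟨n, abs_le.1 hn.le⟩
  have hmono : Monotone fun n => Icc (-u n) (u n) := fun m n hmn =>
    Icc_subset_Icc (neg_le_neg (hu.monotone hmn)) (hu.monotone hmn)
  calc ν₁ J ≤ ν₁ (Icc (-T) T) := measure_mono hsub
    _ = ν₁ (Ioo (-T) T) := measure_congr Ioo_ae_eq_Icc.symm
    _ ≤ ν₁ (⋃ n, Icc (-u n) (u n)) := measure_mono hcover
    _ = ⨆ n, ν₁ (Icc (-u n) (u n)) := hmono.measure_iUnion
    _ ≤ c * ν₂ J := by
      refine iSup_le fun n => ?_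
      obtain ⟨R, hR1, hR2⟩ := exists_between (huT n).2
      obtain ⟨_, ⟨x, hx, rfl⟩, hRx⟩ := exists_lt_of_lt_csSup (hne.image _) hR2
      have hRJ : Icc (-R) R ⊆ J := fun y hy => hsymm x hx y ((abs_le.2 hy).trans hRx.le)
      have hxb : |x| < b := abs_lt.2 (hJ hx)
      exact (h (u n) R (huT n).1 hR1 (hRx.trans hxb)
        ((measure_mono hRJ).trans_lt hfin.lt_top).ne).trans (by gcongr)

lemma lintegral_le_mul_of_even_of_antitoneOn {ν₁ ν₂ : Measure ℝ} [NullSingletonClass ν₁] {b : ℝ}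
    {c : ℝ≥0∞} (hc : c ≠ ∞)
    (h : ∀ r R, 0 < r → r < R → R < b → ν₂ (Icc (-R) R) ≠ ∞ →
      ν₁ (Icc (-r) r) ≤ c * ν₂ (Icc (-R) R))
    (h₁ : ∀ᵐ x ∂ν₁, x ∈ Ioo (-b) b) (h₂ : ∀ᵐ x ∂ν₂, x ∈ Ioo (-b) b)
    {φ : ℝ → ℝ} (hφ₁ : AEMeasurable φ ν₁) (hφ₂ : AEMeasurable φ ν₂)
    (hφpos : ∀ x ∈ Ioo (-b) b, 0 ≤ φ x) (hφeven : ∀ x, φ (-x) = φ x)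
    (hφanti : AntitoneOn φ (Ico 0 b))
    (hfin : ∫⁻ x, ENNReal.ofReal (φ x) ∂ν₂ ≠ ∞) :
    ∫⁻ x, ENNReal.ofReal (φ x) ∂ν₁ ≤ c * ∫⁻ x, ENNReal.ofReal (φ x) ∂ν₂ := by
  have habs : ∀ x, φ |x| = φ x := fun x => by
    rcases abs_choice x with h | h <;> rw [h]
    exact hφeven x
  have hinter : ∀ ν : Measure ℝ, (∀ᵐ x ∂ν, x ∈ Ioo (-b) b) → ∀ t,
      ν {x | t < φ x} = ν ({x | t < φ x} ∩ Ioo (-b) b) := by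
    intro ν hν t
    refine measure_congr ?_
    filter_upwards [hν] with x hx
    exact propext ⟨fun h => ⟨h, hx⟩, fun h => h.1⟩
  rw [lintegral_eq_lintegral_meas_lt ν₁ (h₁.mono hφpos) hφ₁,
    lintegral_eq_lintegral_meas_lt ν₂ (h₂.mono hφpos) hφ₂, ← lintegral_const_mul' _ _ hc]
  refine setLIntegral_mono' measurableSet_Ioi fun t ht => ?_
  rw [hinter ν₁ h₁, hinter ν₂ h₂]
  refine measure_le_mul_of_symmetric h inter_subset_right ?_ ?_
  · rintro x ⟨hx, hxb⟩ y hyx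
    have hxb' : |x| < b := abs_lt.2 hxb
    refine ⟨?_, abs_lt.1 (hyx.trans_lt hxb')⟩
    have := hφanti ⟨abs_nonneg y, hyx.trans_lt hxb'⟩ ⟨abs_nonneg x, hxb'⟩ hyx
    rw [habs, habs] at this
    exact lt_of_lt_of_le hx this
  · rw [← hinter ν₂ h₂]
    have hm := mul_meas_ge_le_lintegral₀ hφ₂.ennreal_ofReal (ENNReal.ofReal t)
    have ht' : ENNReal.ofReal t ≠ 0 := by simpa using ht
    have hle : ν₂ {x | t < φ x} ≤ ν₂ {x | ENNReal.ofReal t ≤ ENNReal.ofReal (φ x)} :=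
      measure_mono fun x (hx : t < φ x) => ENNReal.ofReal_le_ofReal hx.le
    intro htop
    rw [htop, top_le_iff] at hle
    rw [hle, ENNReal.mul_top ht', top_le_iff] at hm
    exact hfin hm

lemma hasDerivAt_odd_extension {b : ℝ} {f f' : ℝ → ℝ}
    (hf : ∀ x ∈ Ioo (-b) b, HasDerivAt f (f' x) x) {x : ℝ} (hx : x ∈ Ioo (-b) b) :
    HasDerivAt (fun y => if 0 ≤ y then f y - f 0 else f 0 - f (-y)) (f' |x|) x := by
  have hneg : ∀ y ∈ Ioo (-b) b, HasDerivAt (fun y => f 0 - f (-y)) (f' (-y)) y := by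
    intro y hy
    have hy' : -y ∈ Ioo (-b) b := ⟨by linarith [hy.2], by linarith [hy.1]⟩
    have h := ((hf (-y) hy').comp y (hasDerivAt_neg y)).const_sub (f 0)
    exact h.congr_deriv (by ring)
  rcases lt_trichotomy x 0 with h | rfl | h
  · rw [abs_of_neg h]
    refine (hneg x hx).congr_of_eventuallyEq ?_
    filter_upwards [gt_mem_nhds h] with y hy
    rw [if_neg (not_le.2 hy)]
  · rw [abs_zero, ← hasDerivWithinAt_univ, ← Iic_union_Ici (a := (0 : ℝ))]
    have h1 := hneg 0 hx
    rw [neg_zero] at h1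
    refine HasDerivWithinAt.union (h1.hasDerivWithinAt.congr_of_mem ?_ self_mem_Iic)
      (((hf 0 hx).sub_const (f 0)).hasDerivWithinAt.congr_of_mem ?_ self_mem_Ici)
    · intro y hy
      rcases (mem_Iic.1 hy).eq_or_lt with rfl | hy
      · simp
      · rw [if_neg (not_le.2 hy)]
    · intro y hy
      rw [if_pos (mem_Ici.1 hy)]
  · rw [abs_of_pos h]
    refine ((hf x hx).sub_const (f 0)).congr_of_eventuallyEq ?_
    filter_upwards [lt_mem_nhds h] with y hy
    rw [if_pos hy.le]

lemma two_mul_lintegral_eq_add_abs {μ : Measure ℝ} [μ.IsNegInvariant] {h : ℝ → ℝ≥0∞}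
    (hh : Measurable h) :
    2 * ∫⁻ x, h x ∂μ = ∫⁻ x, h |x| ∂μ + ∫⁻ x, h (-|x|) ∂μ := by
  have hm : Measurable fun x : ℝ => h |x| := hh.comp continuous_abs.measurable
  rw [← lintegral_add_left hm, two_mul]
  nth_rw 2 [← lintegral_neg_eq_self]
  rw [← lintegral_add_left hh]
  refine lintegral_congr fun x => ?_
  rcases abs_choice x with hx | hx <;> rw [hx]
  rw [neg_neg, add_comm]

lemma isNegInvariant_withDensity {μ : Measure ℝ} [μ.IsNegInvariant] {d : ℝ → ℝ≥0∞}
    (hd : ∀ x, d (-x) = d x) : (μ.withDensity d).IsNegInvariant := by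
  refine ⟨Measure.ext fun s hs => ?_⟩
  rw [Measure.neg_apply, withDensity_apply _ hs.neg, withDensity_apply _ hs,
    ← lintegral_indicator hs.neg, ← lintegral_indicator hs, ← lintegral_neg_eq_self]
  refine lintegral_congr fun x => ?_
  by_cases hx : x ∈ s <;> simp [indicator, hx, hd]

section Perturbation

variable {μ : Measure ℝ} [IsProbabilityMeasure μ] [μ.IsNegInvariant] [NullSingletonClass μ]
  {b C : ℝ} {φ f f' : ℝ → ℝ}

lemma lintegral_sq_abs_le (hμ : ∀ᵐ x ∂μ, x ∈ Ioo (-b) b) (hC : 0 ≤ C)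
    (hP : PoincareOn μ (Ioo (-b) b) C) (hφ : AEMeasurable φ μ)
    (hφpos : ∀ x ∈ Ioo (-b) b, 0 ≤ φ x) (hφeven : ∀ x, φ (-x) = φ x)
    (hφanti : AntitoneOn φ (Ico 0 b)) (hfm : Measurable f) (hfm' : Measurable f')
    (hf : ∀ x ∈ Ioo (-b) b, HasDerivAt f (f' x) x)
    (hfin : ∫⁻ x, ENNReal.ofReal (f' |x| ^ 2)
      ∂(μ.withDensity fun x => ENNReal.ofReal (φ x)) ≠ ∞) :
    ∫⁻ x, ENNReal.ofReal ((f |x| - f 0) ^ 2) ∂(μ.withDensity fun x => ENNReal.ofReal (φ x)) ≤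
      ENNReal.ofReal C *
        ∫⁻ x, ENNReal.ofReal (f' |x| ^ 2) ∂(μ.withDensity fun x => ENNReal.ofReal (φ x)) := by
  have hswap : ∀ u : ℝ → ℝ≥0∞, Measurable u →
      ∫⁻ x, u x ∂(μ.withDensity fun x => ENNReal.ofReal (φ x)) =
        ∫⁻ x, ENNReal.ofReal (φ x) ∂(μ.withDensity u) := by
    intro u hu
    rw [lintegral_withDensity_eq_lintegral_mul₀ hφ.ennreal_ofReal hu.aemeasurable,
      lintegral_withDensity_eq_lintegral_mul₀ hu.aemeasurable hφ.ennreal_ofReal, mul_comm]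
  have hm₁ : Measurable fun x => ENNReal.ofReal ((f |x| - f 0) ^ 2) :=
    (((hfm.comp continuous_abs.measurable).sub_const _).pow_const 2).ennreal_ofReal
  have hm' : Measurable fun x => f' |x| := hfm'.comp continuous_abs.measurable
  have hm₂ : Measurable fun x => ENNReal.ofReal (f' |x| ^ 2) := (hm'.pow_const 2).ennreal_ofReal
  rw [hswap _ hm₂] at hfin ⊢
  rw [hswap _ hm₁]
  have hac₁ := withDensity_absolutelyContinuous μ fun x => ENNReal.ofReal ((f |x| - f 0) ^ 2)
  have hac₂ := withDensity_absolutelyContinuous μ fun x => ENNReal.ofReal (f' |x| ^ 2)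
  refine lintegral_le_mul_of_even_of_antitoneOn ENNReal.ofReal_ne_top ?_ (hac₁.ae_le hμ)
    (hac₂.ae_le hμ) (hφ.mono_ac hac₁) (hφ.mono_ac hac₂) hφpos hφeven hφanti hfin
  intro r R hr hrR hRb hR
  rw [withDensity_apply _ measurableSet_Icc] at hR ⊢
  rw [withDensity_apply _ measurableSet_Icc]
  have hodd : ∀ x : ℝ, (if 0 ≤ -x then f (-x) - f 0 else f 0 - f (- -x)) =
      -(if 0 ≤ x then f x - f 0 else f 0 - f (-x)) := by
    intro x
    rcases lt_trichotomy x 0 with h | rfl | h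
    · rw [if_pos (by linarith), if_neg (by linarith)]; ring
    · simp
    · rw [if_neg (by linarith), if_pos h.le, neg_neg]; ring
  have hsq : ∀ x : ℝ, (if 0 ≤ x then f x - f 0 else f 0 - f (-x)) ^ 2 = (f |x| - f 0) ^ 2 := by
    intro x
    split_ifs with h
    · rw [abs_of_nonneg h]
    · rw [abs_of_neg (not_le.1 h)]; ring
  have := setLIntegral_sq_le_of_odd hμ hC hP hm' hodd
    (fun x hx => hasDerivAt_odd_extension hf hx) hr hrR hRb hR
  simpa only [hsq] using this

lemma lintegral_sq_sub_le (hμ : ∀ᵐ x ∂μ, x ∈ Ioo (-b) b) (hC : 0 ≤ C)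
    (hP : PoincareOn μ (Ioo (-b) b) C) (hφ : AEMeasurable φ μ)
    (hφpos : ∀ x ∈ Ioo (-b) b, 0 ≤ φ x) (hφeven : ∀ x, φ (-x) = φ x)
    (hφanti : AntitoneOn φ (Ico 0 b)) (hfm : Measurable f) (hfm' : Measurable f')
    (hf : ∀ x ∈ Ioo (-b) b, HasDerivAt f (f' x) x)
    (hfin : ∫⁻ x, ENNReal.ofReal (f' x ^ 2)
      ∂(μ.withDensity fun x => ENNReal.ofReal (φ x)) ≠ ∞) :
    ∫⁻ x, ENNReal.ofReal ((f x - f 0) ^ 2) ∂(μ.withDensity fun x => ENNReal.ofReal (φ x)) ≤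
      ENNReal.ofReal C *
        ∫⁻ x, ENNReal.ofReal (f' x ^ 2) ∂(μ.withDensity fun x => ENNReal.ofReal (φ x)) := by
  have : (μ.withDensity fun x => ENNReal.ofReal (φ x)).IsNegInvariant :=
    isNegInvariant_withDensity fun x => by rw [hφeven]
  have h1 := two_mul_lintegral_eq_add_abs
    (μ := μ.withDensity fun x => ENNReal.ofReal (φ x))
    (h := fun x => ENNReal.ofReal ((f x - f 0) ^ 2))
    ((hfm.sub_const _).pow_const 2).ennreal_ofReal
  have h2 := two_mul_lintegral_eq_add_abs
    (μ := μ.withDensity fun x => ENNReal.ofReal (φ x))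
    (h := fun x => ENNReal.ofReal (f' x ^ 2)) (hfm'.pow_const 2).ennreal_ofReal
  have hfin2 := ENNReal.mul_ne_top (ENNReal.ofNat_ne_top (n := 2)) hfin
  rw [h2] at hfin2
  have hneg : ∀ x ∈ Ioo (-b) b, HasDerivAt (fun y => f (-y)) (-f' (-x)) x := by
    intro x hx
    have h := (hf (-x) ⟨by linarith [hx.2], by linarith [hx.1]⟩).comp x (hasDerivAt_neg x)
    exact h.congr_deriv (by ring)
  have hp := lintegral_sq_abs_le hμ hC hP hφ hφpos hφeven hφanti hfm hfm' hf
    (ne_top_of_le_ne_top hfin2 le_self_add)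
  have hn := lintegral_sq_abs_le hμ hC hP hφ hφpos hφeven hφanti (hfm.comp measurable_neg)
    (hfm'.comp measurable_neg).neg hneg
    (by simpa using ne_top_of_le_ne_top hfin2 le_add_self)
  simp only [Function.comp_apply, Pi.neg_apply, neg_zero, neg_sq] at hn
  rw [← ENNReal.mul_le_mul_iff_right (a := 2) (by simp) (by simp), h1, mul_left_comm, h2, mul_add]
  exact add_le_add hp hn

lemma poincareOn_withDensity (hμ : ∀ᵐ x ∂μ, x ∈ Ioo (-b) b) (hC : 0 ≤ C)
    (hP : PoincareOn μ (Ioo (-b) b) C) (hφ : AEMeasurable φ μ)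
    (hφpos : ∀ x ∈ Ioo (-b) b, 0 ≤ φ x) (hφeven : ∀ x, φ (-x) = φ x)
    (hφanti : AntitoneOn φ (Ico 0 b)) :
    PoincareOn (μ.withDensity fun x => ENNReal.ofReal (φ x)) (Ioo (-b) b) C := by
  intro f f' hf _ hfi'
  set ν := μ.withDensity fun x => ENNReal.ofReal (φ x) with hν
  have hνs : ∀ᵐ x ∂ν, x ∈ Ioo (-b) b := (withDensity_absolutelyContinuous μ _).ae_le hμ
  set F := (Ioo (-b) b).indicator f with hF
  set F' := (Ioo (-b) b).indicator (deriv f) with hF'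
  have hFm : Measurable F := by
    classical
    rw [hF, ← piecewise_eq_indicator]
    exact ContinuousOn.measurable_piecewise
      (fun x hx => (hf x hx).continuousAt.continuousWithinAt) continuousOn_const measurableSet_Ioo
  have hFm' : Measurable F' := (measurable_deriv f).indicator measurableSet_Ioo
  have hFd : ∀ x ∈ Ioo (-b) b, HasDerivAt F (F' x) x := by
    intro x hx
    rw [hF', indicator_of_mem hx, (hf x hx).deriv]
    refine (hf x hx).congr_of_eventuallyEq ?_
    filter_upwards [isOpen_Ioo.mem_nhds hx] with y hy using indicator_of_mem hy f
  have hFe : (fun x => (f x - F 0) ^ 2) =ᵐ[ν] fun x => (F x - F 0) ^ 2 := by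
    filter_upwards [hνs] with x hx
    rw [hF, indicator_of_mem hx]
  have hFe' : (fun x => (f' x) ^ 2) =ᵐ[ν] fun x => (F' x) ^ 2 := by
    filter_upwards [hνs] with x hx
    rw [hF', indicator_of_mem hx, (hf x hx).deriv]
  have hFi' := hfi'.congr hFe'
  have hnn : ∀ u : ℝ → ℝ, 0 ≤ᵐ[ν] fun x => (u x) ^ 2 := fun u =>
    Filter.Eventually.of_forall fun x => sq_nonneg _
  have hfin : ∫⁻ x, ENNReal.ofReal (F' x ^ 2) ∂ν ≠ ∞ :=
    ((hasFiniteIntegral_iff_ofReal (hnn F')).1 hFi'.2).ne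
  have key := lintegral_sq_sub_le hμ hC hP hφ hφpos hφeven hφanti hFm hFm' hFd hfin
  have hvar : Var ν f ≤ ∫ x, (f x - F 0) ^ 2 ∂ν :=
    ciInf_le ⟨0, by rintro _ ⟨a, rfl⟩; exact integral_nonneg fun x => sq_nonneg _⟩ (F 0)
  refine hvar.trans ?_
  rw [integral_congr_ae hFe, integral_congr_ae hFe',
    integral_eq_lintegral_of_nonneg_ae (hnn _) ((hFm.sub_const _).pow_const 2).aestronglyMeasurable,
    integral_eq_lintegral_of_nonneg_ae (hnn _) (hFm'.pow_const 2).aestronglyMeasurable]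
  have := ENNReal.toReal_mono (ENNReal.mul_ne_top ENNReal.ofReal_ne_top hfin) key
  rwa [ENNReal.toReal_mul, ENNReal.toReal_ofReal hC] at this

end Perturbation

lemma aemeasurable_of_even_of_antitoneOn {μ : Measure ℝ} {b : ℝ} {φ : ℝ → ℝ}
    (hμ : ∀ᵐ x ∂μ, x ∈ Ioo (-b) b) (hφeven : ∀ x, φ (-x) = φ x)
    (hφanti : AntitoneOn φ (Ico 0 b)) : AEMeasurable φ μ := by
  have hmono : MonotoneOn φ (Ioc (-b) 0) := by
    intro x hx y hy hxy
    rw [← hφeven x, ← hφeven y]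
    exact hφanti ⟨by linarith [hy.2], by linarith [hy.1]⟩ ⟨by linarith [hx.2], by linarith [hx.1]⟩
      (neg_le_neg hxy)
  have h : AEMeasurable φ (μ.restrict (Ioc (-b) 0 ∪ Ico 0 b)) :=
    aemeasurable_union_iff.2 ⟨aemeasurable_restrict_of_monotoneOn measurableSet_Ioc hmono,
      aemeasurable_restrict_of_antitoneOn measurableSet_Ico hφanti⟩
  rwa [Measure.restrict_eq_self_of_ae_mem] at h
  filter_upwards [hμ] with x hx
  rcases le_total x 0 with h0 | h0
  · exact Or.inl ⟨hx.1, h0⟩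
  · exact Or.inr ⟨h0, hx.2⟩

/-- even, centrally-peaked perturbation of an even measure on a symmetric
interval does not increase the Poincaré constant. -/
theorem stmt7 (b : ℝ) (hb : 0 < b) (V : ℝ → ℝ)
    (hVc : ContinuousOn V (Set.Ioo (-b) b)) (hVeven : ∀ x, V (-x) = V x)
    (μ : Measure ℝ)
    (hμ : μ = MeasureTheory.volume.withDensity fun t =>
      ENNReal.ofReal (Set.indicator (Set.Ioo (-b) b) (fun x => Real.exp (-(V x))) t))
    [IsProbabilityMeasure μ]
    (φ : ℝ → ℝ) (hφpos : ∀ x ∈ Set.Ioo (-b) b, 0 ≤ φ x)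
    (hφeven : ∀ x, φ (-x) = φ x)
    (hφanti : AntitoneOn φ (Set.Ico 0 b))
    (μt : Measure ℝ) (hμt : μt = μ.withDensity fun t => ENNReal.ofReal (φ t))
    [IsProbabilityMeasure μt]
    (hCP : PoincareOn μ (Set.Ioo (-b) b) (CP μ (Set.Ioo (-b) b))) :
    CP μt (Set.Ioo (-b) b) ≤ CP μ (Set.Ioo (-b) b) := by
  set d : ℝ → ℝ≥0∞ := fun t =>
    ENNReal.ofReal (Set.indicator (Set.Ioo (-b) b) (fun x => Real.exp (-(V x))) t) with hd
  have hmem : ∀ x, -x ∈ Ioo (-b) b ↔ x ∈ Ioo (-b) b := fun x =>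
    ⟨fun h => ⟨by linarith [h.2], by linarith [h.1]⟩,
      fun h => ⟨by linarith [h.2], by linarith [h.1]⟩⟩
  have hdeven : ∀ x, d (-x) = d x := fun x => by
    by_cases hx : x ∈ Ioo (-b) b
    · simp only [hd, indicator_of_mem hx, indicator_of_mem ((hmem x).2 hx), hVeven]
    · simp only [hd, indicator_of_notMem hx, indicator_of_notMem (mt (hmem x).1 hx)]
  have : μ.IsNegInvariant := hμ ▸ isNegInvariant_withDensity hdeven
  have : NullSingletonClass μ := hμ ▸ inferInstance
  have hsupp : ∀ᵐ x ∂μ, x ∈ Ioo (-b) b := by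
    have hz : μ (Ioo (-b) b)ᶜ = 0 := by
      rw [hμ, withDensity_apply _ measurableSet_Ioo.compl]
      refine (setLIntegral_congr_fun (g := fun _ => 0) measurableSet_Ioo.compl fun x hx => ?_).trans
        (by simp)
      simp only [hd, indicator_of_notMem hx, ENNReal.ofReal_zero]
    exact hz
  have hC : 0 ≤ CP μ (Ioo (-b) b) := Real.sInf_nonneg fun x hx => hx.1
  refine csInf_le ⟨0, fun x hx => hx.1⟩ ⟨hC, ?_⟩
  rw [hμt]
  exact poincareOn_withDensity hsupp hC hCP
    (aemeasurable_of_even_of_antitoneOn hsupp hφeven hφanti) hφpos hφeven hφanti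
end

section
/- Let μ be the double exponential measure restricted to a symmetric interval [−b, b]. Then the optimal Poincaré constant equals (1/4 + ω²)^{−1}, where ω is the unique zero of x ↦ 2·cotan(bx) + 1/x on (0, π/b), and the inequality is saturated by f(x) = e^{|x|/2} sin(ωx). -/
open MeasureTheory Real Set

/-- The zero of `x ↦ 2 cot (b x) + 1 / x` on `(0, π / b)` is unique. -/
theorem two_cot_add_inv_zero_unique {b x y : ℝ} (hb : 0 < b) (hx : x ∈ Ioo 0 (π / b))
    (hy : y ∈ Ioo 0 (π / b)) (hx0 : 2 * (cos (b * x) / sin (b * x)) + 1 / x = 0)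
    (hy0 : 2 * (cos (b * y) / sin (b * y)) + 1 / y = 0) : x = y := by
  have key : ∀ x y : ℝ, x ∈ Ioo 0 (π / b) → y ∈ Ioo 0 (π / b) → x < y →
      2 * (cos (b * y) / sin (b * y)) + 1 / y < 2 * (cos (b * x) / sin (b * x)) + 1 / x := by
    intro x y hx hy hxy
    have hyb : b * y < π := by rw [mul_comm]; exact (lt_div_iff₀ hb).1 hy.2
    have hbx : 0 < b * x := mul_pos hb hx.1
    have hbxy : b * x < b * y := mul_lt_mul_of_pos_left hxy hb
    have hsx : 0 < sin (b * x) := sin_pos_of_pos_of_lt_pi hbx (hbxy.trans hyb)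
    have hsy : 0 < sin (b * y) := sin_pos_of_pos_of_lt_pi (hbx.trans hbxy) hyb
    have hs : 0 < sin (b * y - b * x) := sin_pos_of_pos_of_lt_pi (by linarith) (by linarith)
    rw [sin_sub] at hs
    have hcot : cos (b * y) / sin (b * y) < cos (b * x) / sin (b * x) := by
      rw [div_lt_div_iff₀ hsy hsx]
      linarith
    have hinv : 1 / y < 1 / x := one_div_lt_one_div_of_lt hx.1 hxy
    linarith
  rcases lt_trichotomy x y with h | h | h
  · linarith [key x y hx hy h]
  · exact h
  · linarith [key y x hy hx h]

/-- Hardy-type inequality on `[0, b]` with Dirichlet condition at `0`, for the weight `e^{-x}`,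
obtained from Picone's identity with the eigenfunction `e^{x/2} sin (ω x)`. -/
theorem hardy_exp_weight {b ω : ℝ} (hb : 0 < b) (hω : 0 < ω) (hωb : ω * b < π)
    (hneu : sin (ω * b) + 2 * ω * cos (ω * b) = 0) {g g' : ℝ → ℝ}
    (hg : ∀ x ∈ Ico 0 b, HasDerivAt g (g' x) x)
    (hi : IntervalIntegrable (fun x => (g x - g 0) ^ 2 * exp (-x)) volume 0 b)
    (hi' : IntervalIntegrable (fun x => g' x ^ 2 * exp (-x)) volume 0 b) :
    (1 / 4 + ω ^ 2) * ∫ x in (0)..b, (g x - g 0) ^ 2 * exp (-x) ≤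
      ∫ x in (0)..b, g' x ^ 2 * exp (-x) := by
  have hsin : ∀ x ∈ Ioo 0 b, 0 < sin (ω * x) := fun x hx =>
    sin_pos_of_pos_of_lt_pi (mul_pos hω hx.1)
      ((mul_lt_mul_of_pos_left hx.2 hω).trans hωb)
  set G : ℝ → ℝ := fun x =>
    (g x - g 0) ^ 2 * (1 / 2 + ω * (cos (ω * x) / sin (ω * x))) * exp (-x) with hG
  set F : ℝ → ℝ := fun x =>
    g' x ^ 2 * exp (-x) - (1 / 4 + ω ^ 2) * ((g x - g 0) ^ 2 * exp (-x)) with hF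
  have hFi : IntervalIntegrable F volume 0 b := hi'.sub (hi.const_mul _)
  have hG_nonneg : ∀ x ∈ Ioo 0 b, 0 ≤ G x := by
    intro x hx
    have hsb : 0 < sin (ω * b) := sin_pos_of_pos_of_lt_pi (mul_pos hω hb) hωb
    have hs : 0 < sin (ω * b - ω * x) := by
      have := mul_lt_mul_of_pos_left hx.2 hω
      exact sin_pos_of_pos_of_lt_pi (by linarith) (by linarith [mul_pos hω hx.1])
    rw [sin_sub] at hs
    have hpos : 0 ≤ 1 / 2 + ω * (cos (ω * x) / sin (ω * x)) := by
      have h1 : 0 ≤ sin (ω * x) + 2 * ω * cos (ω * x) := by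
        have : 0 ≤ sin (ω * b) * (sin (ω * x) + 2 * ω * cos (ω * x)) := by
          have e : sin (ω * b) * (sin (ω * x) + 2 * ω * cos (ω * x)) =
            2 * ω * (sin (ω * b) * cos (ω * x) - cos (ω * b) * sin (ω * x)) := by
            linear_combination sin (ω * x) * hneu
          rw [e]; positivity
        exact nonneg_of_mul_nonneg_right this hsb
      have h2 : 1 / 2 + ω * (cos (ω * x) / sin (ω * x)) =
          (sin (ω * x) + 2 * ω * cos (ω * x)) / (2 * sin (ω * x)) := by
        have := (hsin x hx).ne'
        field_simp
      rw [h2]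
      have := hsin x hx
      positivity
    positivity
  have hG_deriv : ∀ x ∈ Ioo 0 b, HasDerivAt G
      ((2 * (g x - g 0) * g' x * (1 / 2 + ω * (cos (ω * x) / sin (ω * x))) -
        (g x - g 0) ^ 2 * ((1 / 2 + ω * (cos (ω * x) / sin (ω * x))) ^ 2 + 1 / 4 + ω ^ 2)) *
        exp (-x)) x := by
    intro x hx
    have hs := (hsin x hx).ne'
    have hlin : HasDerivAt (fun x => ω * x) ω x := by simpa using (hasDerivAt_id x).const_mul ω
    have h := ((((hg x ⟨hx.1.le, hx.2⟩).sub_const (g 0)).pow 2).mul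
      (((hlin.cos.div hlin.sin hs).const_mul ω).const_add (1 / 2))).mul (hasDerivAt_neg x).exp
    refine h.congr_deriv ?_
    simp only [Pi.pow_apply, Pi.div_apply, Pi.mul_apply]
    field_simp
    simp only [Nat.cast_ofNat, Nat.add_one_sub_one, pow_one]
    ring
  have hprim : ∀ ε β : ℝ, 0 < ε → ε < β → β < b → 0 ≤ G ε + ∫ x in ε..β, F x := by
    intro ε β hε hεβ hβ
    have hsub : Icc ε β ⊆ Ioo 0 b := fun x hx => ⟨hε.trans_le hx.1, hx.2.trans_lt hβ⟩
    have h := intervalIntegral.sub_le_integral_of_hasDeriv_right_of_le hεβ.le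
      (fun x hx => (hG_deriv x (hsub hx)).continuousAt.continuousWithinAt)
      (fun x hx => (hG_deriv x (hsub (Ioo_subset_Icc_self hx))).hasDerivWithinAt)
      (φ := F) ?_ ?_
    · linarith [hG_nonneg β (hsub ⟨hεβ.le, le_rfl⟩)]
    · exact ((intervalIntegrable_iff_integrableOn_Ioo_of_le hb.le).1 hFi).mono_set hsub
    · intro x _
      simp only [hF]
      have hsq := mul_nonneg (sq_nonneg
        (g' x - (g x - g 0) * (1 / 2 + ω * (cos (ω * x) / sin (ω * x))))) (exp_pos (-x)).le
      linarith
  have hcont : ContinuousOn (fun x => ∫ t in (0)..x, F t) (Icc 0 b) := by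
    have := intervalIntegral.continuousOn_primitive_interval
      (μ := volume) (f := F) (a := 0) (b := b)
      (by rw [uIcc_of_le hb.le]; exact (intervalIntegrable_iff_integrableOn_Icc_of_le hb.le).1 hFi)
    rwa [uIcc_of_le hb.le] at this
  have hG_lim : Filter.Tendsto G (nhdsWithin 0 (Ioi 0)) (nhds 0) := by
    have hlin : HasDerivAt (fun x => ω * x) ω 0 := by
      simpa using (hasDerivAt_id (0 : ℝ)).const_mul ω
    have hs := hlin.sin.tendsto_slope.mono_left
      (nhdsWithin_mono 0 (fun x (hx : 0 < x) => hx.ne'))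
    have hgs := (hg 0 ⟨le_rfl, hb⟩).tendsto_slope.mono_left
      (nhdsWithin_mono 0 (fun x (hx : 0 < x) => hx.ne'))
    have hgc : Filter.Tendsto (fun x => g x - g 0) (nhdsWithin 0 (Ioi 0)) (nhds 0) := by
      have : Filter.Tendsto (fun x => g x - g 0) (nhds 0) (nhds (g 0 - g 0)) :=
        (hg 0 ⟨le_rfl, hb⟩).continuousAt.sub_const (g 0)
      rw [sub_self] at this
      exact this.mono_left nhdsWithin_le_nhds
    have he : Filter.Tendsto (fun x : ℝ => exp (-x)) (nhdsWithin 0 (Ioi 0)) (nhds (exp (-0))) :=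
      (by fun_prop : Continuous fun x : ℝ => exp (-x)).continuousAt.tendsto.mono_left
        nhdsWithin_le_nhds
    have hc : Filter.Tendsto (fun x : ℝ => cos (ω * x)) (nhdsWithin 0 (Ioi 0))
        (nhds (cos (ω * 0))) :=
      (by fun_prop : Continuous fun x : ℝ => cos (ω * x)).continuousAt.tendsto.mono_left
        nhdsWithin_le_nhds
    have hlim := (((hgc.pow 2).mul_const (1 / 2)).add
      (((hgc.mul hgs).mul (hc.const_mul ω)).mul (hs.inv₀ (by simpa using hω.ne')))).mul he
    simp only [ne_eq, OfNat.ofNat_ne_zero, not_false_eq_true, zero_pow, zero_mul, add_zero]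
      at hlim
    refine hlim.congr' ?_
    filter_upwards [Ioo_mem_nhdsGT hb] with x hx
    have h1 := (hsin x hx).ne'
    have h2 := hx.1.ne'
    simp only [hG, slope_def_field, mul_zero, sin_zero, sub_zero]
    field_simp
  have h0b : ∀ ε ∈ Ioo 0 b, 0 ≤ G ε + ∫ x in ε..b, F x := by
    intro ε hε
    have hsubi : ∀ β ∈ Icc 0 b, IntervalIntegrable F volume 0 β := fun β hβ =>
      hFi.mono_set (by rw [uIcc_of_le hβ.1, uIcc_of_le hb.le]; exact Icc_subset_Icc_right hβ.2)
    have hlim : Filter.Tendsto (fun β => ∫ t in (0)..β, F t) (nhdsWithin b (Iio b))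
        (nhds (∫ t in (0)..b, F t)) :=
      (hcont b ⟨hb.le, le_rfl⟩).tendsto.mono_left
        (nhdsWithin_le_of_mem (Filter.mem_of_superset (Ioo_mem_nhdsLT hb) Ioo_subset_Icc_self))
    have hle : G ε * (-1) + ∫ t in (0)..ε, F t ≤ ∫ t in (0)..b, F t := by
      refine ge_of_tendsto hlim ?_
      filter_upwards [Ioo_mem_nhdsLT hε.2] with β hβ
      have h1 := hprim ε β hε.1 hβ.1 hβ.2
      have h2 := intervalIntegral.integral_interval_sub_left
        (hsubi β ⟨(hε.1.trans hβ.1).le, hβ.2.le⟩) (hsubi ε ⟨hε.1.le, hε.2.le⟩)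
      linarith
    have h2 := intervalIntegral.integral_interval_sub_left hFi (hsubi ε ⟨hε.1.le, hε.2.le⟩)
    linarith
  have hfin : 0 ≤ ∫ x in (0)..b, F x := by
    have hlim : Filter.Tendsto (fun ε => ∫ t in (0)..ε, F t) (nhdsWithin 0 (Ioi 0))
        (nhds (∫ t in (0)..0, F t)) :=
      (hcont 0 ⟨le_rfl, hb.le⟩).tendsto.mono_left
        (nhdsWithin_le_of_mem (Filter.mem_of_superset (Ioo_mem_nhdsGT hb) Ioo_subset_Icc_self))
    have hlim2 := hG_lim.add (hlim.const_sub (∫ x in (0)..b, F x))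
    rw [intervalIntegral.integral_same, sub_zero, zero_add] at hlim2
    refine ge_of_tendsto hlim2 ?_
    filter_upwards [Ioo_mem_nhdsGT hb] with ε hε
    have hε' : IntervalIntegrable F volume 0 ε :=
      hFi.mono_set (by
        rw [uIcc_of_le hε.1.le, uIcc_of_le hb.le]; exact Icc_subset_Icc_right hε.2.le)
    rw [intervalIntegral.integral_interval_sub_left hFi hε']
    exact h0b ε hε
  rw [hF, intervalIntegral.integral_sub hi' (hi.const_mul _),
    intervalIntegral.integral_const_mul] at hfin
  linarith

/-- The normalized restriction of the double exponential measure to `[-b, b]`, expressed through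
interval integrals against `e^{-|x|}`. -/
theorem doubleExp_restrict_integral {b : ℝ} (hb : 0 < b) {ν μ : Measure ℝ}
    (hν : ν = volume.withDensity fun t => ENNReal.ofReal ((1 / 2) * exp (-|t|)))
    (hμ : μ = (ν (Icc (-b) b))⁻¹ • ν.restrict (Icc (-b) b)) :
    ∃ k : ℝ, 0 < k ∧ (∀ F : ℝ → ℝ, ∫ x, F x ∂μ = k * ∫ x in (-b)..b, F x * exp (-|x|)) ∧
      ∀ F : ℝ → ℝ, Integrable F μ ↔
        IntervalIntegrable (fun x => F x * exp (-|x|)) volume (-b) b := by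
  have hbb : -b ≤ b := by linarith
  have hcont : Continuous fun t : ℝ => (1 / 2) * exp (-|t|) := by fun_prop
  have hmeas : Measurable fun t : ℝ => ((1 / 2) * exp (-|t|)).toNNReal :=
    hcont.measurable.real_toNNReal
  have hres : ν.restrict (Icc (-b) b) = (volume.restrict (Icc (-b) b)).withDensity
      fun t => (((1 / 2) * exp (-|t|)).toNNReal : ENNReal) := by
    rw [hν, restrict_withDensity measurableSet_Icc]; rfl
  have hνI : ν (Icc (-b) b) = ∫⁻ t in Icc (-b) b, ENNReal.ofReal ((1 / 2) * exp (-|t|)) := by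
    rw [hν, withDensity_apply _ measurableSet_Icc]
  have hofReal : ν (Icc (-b) b) =
      ENNReal.ofReal (∫ t in Icc (-b) b, (1 / 2) * exp (-|t|)) := by
    rw [hνI, ofReal_integral_eq_lintegral_ofReal (hcont.continuousOn.integrableOn_compact
      isCompact_Icc) (Filter.Eventually.of_forall fun t => by positivity)]
  have hpos : 0 < ∫ t in Icc (-b) b, (1 / 2) * exp (-|t|) := by
    rw [integral_Icc_eq_integral_Ioc, ← intervalIntegral.integral_of_le hbb]
    exact intervalIntegral.intervalIntegral_pos_of_pos (hcont.intervalIntegrable _ _)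
      (fun t => by positivity) (by linarith)
  have hc0 : (ν (Icc (-b) b))⁻¹ ≠ 0 := by rw [hofReal]; simp
  have hct : (ν (Icc (-b) b))⁻¹ ≠ ⊤ := by
    rw [hofReal, ne_eq, ENNReal.inv_eq_top, ENNReal.ofReal_eq_zero, not_le]; exact hpos
  have hsmul : ∀ (F : ℝ → ℝ) (x : ℝ), ((1 / 2) * exp (-|x|)).toNNReal • F x =
      (1 / 2) * (F x * exp (-|x|)) := fun F x => by
    rw [NNReal.smul_def, Real.coe_toNNReal _ (by positivity), smul_eq_mul]; ring
  refine ⟨(ν (Icc (-b) b))⁻¹.toReal * (1 / 2),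
    mul_pos (ENNReal.toReal_pos hc0 hct) (by norm_num), fun F => ?_, fun F => ?_⟩
  · rw [hμ, integral_smul_measure, hres, integral_withDensity_eq_integral_smul hmeas,
      intervalIntegral.integral_of_le hbb, ← integral_Icc_eq_integral_Ioc]
    simp only [hsmul, integral_const_mul, smul_eq_mul]
    ring
  · rw [hμ, integrable_smul_measure hc0 hct, hres, integrable_withDensity_iff_integrable_smul hmeas,
      intervalIntegrable_iff_integrableOn_Icc_of_le hbb]
    simp only [hsmul]
    exact integrable_const_mul_iff (by norm_num) _

/-- Poincaré inequality for `e^{-|x|}` on `[-b, b]`, centred at the value at `0`. -/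
theorem poincare_exp_abs_weight {b ω : ℝ} (hb : 0 < b) (hω : 0 < ω) (hωb : ω * b < π)
    (hneu : sin (ω * b) + 2 * ω * cos (ω * b) = 0) {g g' : ℝ → ℝ}
    (hg : ∀ x ∈ Ioo (-b) b, HasDerivAt g (g' x) x)
    (hi : IntervalIntegrable (fun x => g x ^ 2 * exp (-|x|)) volume (-b) b)
    (hi' : IntervalIntegrable (fun x => g' x ^ 2 * exp (-|x|)) volume (-b) b) :
    (1 / 4 + ω ^ 2) * ∫ x in (-b)..b, (g x - g 0) ^ 2 * exp (-|x|) ≤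
      ∫ x in (-b)..b, g' x ^ 2 * exp (-|x|) := by
  have hbb : -b ≤ b := by linarith
  have h0 : (0 : ℝ) ∈ uIcc (-b) b := by rw [uIcc_of_le hbb]; exact ⟨by linarith, hb.le⟩
  have hexp : Continuous fun x : ℝ => exp (-|x|) := by fun_prop
  have hic : IntervalIntegrable (fun x => (g x - g 0) ^ 2 * exp (-|x|)) volume (-b) b := by
    rw [intervalIntegrable_iff_integrableOn_Ioo_of_le hbb] at hi ⊢
    have hconst : IntegrableOn (fun x => 2 * g 0 ^ 2 * exp (-|x|)) (Ioo (-b) b) :=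
      ((hexp.const_mul _).continuousOn.integrableOn_compact isCompact_Icc).mono_set
        Ioo_subset_Icc_self
    have hgc : ContinuousOn g (Ioo (-b) b) := fun x hx =>
      (hg x hx).continuousAt.continuousWithinAt
    refine ((Integrable.const_mul hi 2).add hconst).mono'
      ((((hgc.sub continuousOn_const).pow 2).mul hexp.continuousOn).aestronglyMeasurable
        measurableSet_Ioo) (Filter.Eventually.of_forall fun x => ?_)
    rw [norm_of_nonneg (by positivity)]
    simp only [Pi.add_apply]
    nlinarith [mul_nonneg (sq_nonneg (g x + g 0)) (exp_pos (-|x|)).le]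
  have split : ∀ {H : ℝ → ℝ}, IntervalIntegrable (fun x => H x * exp (-|x|)) volume (-b) b →
      IntervalIntegrable (fun x => H x * exp (-x)) volume 0 b ∧
      IntervalIntegrable (fun x => H (-x) * exp (-x)) volume 0 b ∧
      ∫ x in (-b)..b, H x * exp (-|x|) =
        (∫ x in (0)..b, H (-x) * exp (-x)) + ∫ x in (0)..b, H x * exp (-x) := by
    intro H hH
    have hl := hH.mono_set (uIcc_subset_uIcc_left h0)
    have hr := hH.mono_set (uIcc_subset_uIcc_right h0)
    have hln := ((IntervalIntegrable.iff_comp_neg).1 hl).symm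
    have hsum := intervalIntegral.integral_add_adjacent_intervals hl hr
    have hneg := intervalIntegral.integral_comp_neg (a := 0) (b := b)
      (fun x => H x * exp (-|x|))
    rw [neg_zero] at hneg hln
    rw [neg_neg] at hln
    have eqr : ∀ x ∈ uIcc 0 b, H x * exp (-|x|) = H x * exp (-x) := fun x hx => by
      rw [uIcc_of_le hb.le] at hx
      rw [abs_of_nonneg hx.1]
    have eql : ∀ x ∈ uIcc 0 b, H (-x) * exp (-|-x|) = H (-x) * exp (-x) := fun x hx => by
      rw [uIcc_of_le hb.le] at hx
      rw [abs_neg, abs_of_nonneg hx.1]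
    refine ⟨hr.congr fun x hx => eqr x (uIoc_subset_uIcc hx),
      hln.congr fun x hx => eql x (uIoc_subset_uIcc hx), ?_⟩
    rw [← hsum, ← hneg, intervalIntegral.integral_congr eqr, intervalIntegral.integral_congr eql]
  obtain ⟨h1, h2, h3⟩ := split hic
  obtain ⟨h1', h2', h3'⟩ := split (H := fun x => g' x ^ 2) hi'
  have hR := hardy_exp_weight hb hω hωb hneu (fun x hx => hg x ⟨by linarith [hx.1], hx.2⟩) h1 h1'
  have hL := hardy_exp_weight (g := fun x => g (-x)) (g' := fun x => -g' (-x)) hb hω hωb hneu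
    (fun x hx => by
      have := (hg (-x) ⟨by linarith [hx.2], by linarith [hx.1]⟩).comp x (hasDerivAt_neg x)
      exact this.congr_deriv (by ring))
    (by simpa using h2) (by simpa using h2')
  simp only [neg_zero, neg_sq] at hL
  rw [h3, h3', mul_add]
  linarith

/-- The function `e^{|x|/2} sin (ω x)` is differentiable everywhere, including at `0`. -/
theorem hasDerivAt_exp_abs_mul_sin (ω x : ℝ) :
    HasDerivAt (fun x => exp (|x| / 2) * sin (ω * x))
      (exp (|x| / 2) * (sin (ω * |x|) / 2 + ω * cos (ω * x))) x := by
  have hmul : ∀ c : ℝ, HasDerivAt (fun x => exp (c * x) * sin (ω * x))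
      (exp (c * x) * (c * sin (ω * x) + ω * cos (ω * x))) x := fun c => by
    have hlin : ∀ a : ℝ, HasDerivAt (fun x => a * x) a x := fun a => by
      simpa using (hasDerivAt_id x).const_mul a
    exact ((hlin c).exp.mul (hlin ω).sin).congr_deriv (by ring)
  have hpos : 0 ≤ x → HasDerivWithinAt (fun x => exp (|x| / 2) * sin (ω * x))
      (exp (|x| / 2) * (sin (ω * |x|) / 2 + ω * cos (ω * x))) (Ici 0) x := fun hx => by
    have heq : ∀ y ∈ Ici (0 : ℝ), exp (|y| / 2) * sin (ω * y) = exp (1 / 2 * y) * sin (ω * y) :=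
      fun y hy => by rw [abs_of_nonneg hy, div_eq_inv_mul, one_div]
    refine ((hmul (1 / 2)).hasDerivWithinAt.congr heq (heq x hx)).congr_deriv ?_
    rw [abs_of_nonneg hx]
    ring_nf
  have hneg : x ≤ 0 → HasDerivWithinAt (fun x => exp (|x| / 2) * sin (ω * x))
      (exp (|x| / 2) * (sin (ω * |x|) / 2 + ω * cos (ω * x))) (Iic 0) x := fun hx => by
    have heq : ∀ y ∈ Iic (0 : ℝ), exp (|y| / 2) * sin (ω * y) =
        exp (-(1 / 2) * y) * sin (ω * y) :=
      fun y hy => by rw [abs_of_nonpos hy]; ring_nf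
    refine ((hmul (-(1 / 2))).hasDerivWithinAt.congr heq (heq x hx)).congr_deriv ?_
    rw [abs_of_nonpos hx, mul_neg, sin_neg]
    ring_nf
  rcases lt_trichotomy x 0 with hx | rfl | hx
  · exact (hneg hx.le).hasDerivAt (Iic_mem_nhds hx)
  · have := (hneg le_rfl).union (hpos le_rfl)
    rwa [Iic_union_Ici, hasDerivWithinAt_univ] at this
  · exact (hpos hx.le).hasDerivAt (Ici_mem_nhds hx)

/-- The symmetric interval integral of an odd function vanishes. -/
theorem integral_symm_eq_zero_of_odd {H : ℝ → ℝ} (hH : ∀ x, H (-x) = -H x) (b : ℝ) :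
    ∫ x in (-b)..b, H x = 0 := by
  have h := intervalIntegral.integral_comp_neg (a := -b) (b := b) H
  rw [neg_neg, intervalIntegral.integral_congr (g := fun x => -H x) (fun x _ => hH x),
    intervalIntegral.integral_neg] at h
  linarith

/-- Equality case: the Rayleigh quotient of `e^{|x|/2} sin (ω x)` for the weight `e^{-|x|}`. -/
theorem integral_sq_sin_eq {b ω : ℝ} (hb : 0 ≤ b)
    (hneu : sin (ω * b) + 2 * ω * cos (ω * b) = 0) :
    (1 / 4 + ω ^ 2) * ∫ x in (-b)..b, sin (ω * x) ^ 2 =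
      ∫ x in (-b)..b, (sin (ω * |x|) / 2 + ω * cos (ω * x)) ^ 2 := by
  have even : ∀ {H : ℝ → ℝ}, Continuous H → (∀ x, H (-x) = H x) →
      ∫ x in (-b)..b, H x = 2 * ∫ x in (0)..b, H x := by
    intro H hH heven
    have h := intervalIntegral.integral_comp_neg (a := 0) (b := b) H
    rw [intervalIntegral.integral_congr (g := H) (fun x _ => heven x), neg_zero] at h
    rw [← intervalIntegral.integral_add_adjacent_intervals (hH.intervalIntegrable (-b) 0)
      (hH.intervalIntegrable 0 b), ← h]
    ring
  rw [even (by fun_prop) (fun x => by rw [mul_neg, sin_neg, neg_sq]),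
    even (by fun_prop) (fun x => by rw [mul_neg, cos_neg, abs_neg])]
  have habs : ∫ x in (0)..b, (sin (ω * |x|) / 2 + ω * cos (ω * x)) ^ 2 =
      ∫ x in (0)..b, (sin (ω * x) / 2 + ω * cos (ω * x)) ^ 2 := by
    refine intervalIntegral.integral_congr fun x hx => ?_
    rw [uIcc_of_le hb] at hx
    simp only [abs_of_nonneg hx.1]
  have hlin : ∀ x : ℝ, HasDerivAt (fun x => ω * x) ω x := fun x => by
    simpa using (hasDerivAt_id x).const_mul ω
  have hftc := intervalIntegral.integral_eq_sub_of_hasDerivAt (a := 0) (b := b)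
    (f := fun x => sin (ω * x) * (sin (ω * x) / 2 + ω * cos (ω * x)))
    (f' := fun x => (sin (ω * x) / 2 + ω * cos (ω * x)) ^ 2 - (1 / 4 + ω ^ 2) * sin (ω * x) ^ 2)
    (fun x _ => ((hlin x).sin.mul (((hlin x).sin.div_const 2).add
      ((hlin x).cos.const_mul ω))).congr_deriv (by simp only [Pi.add_apply]; ring))
    (Continuous.intervalIntegrable (by fun_prop) _ _)
  rw [intervalIntegral.integral_sub (Continuous.intervalIntegrable (by fun_prop) _ _)
    (Continuous.intervalIntegrable (by fun_prop) _ _), intervalIntegral.integral_const_mul,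
    mul_zero, sin_zero, zero_mul, sub_zero] at hftc
  rw [habs]
  linear_combination -2 * hftc - sin (ω * b) * hneu

/-- the double exponential measure restricted to `[-b,b]` has optimal Poincaré
constant `(1/4 + ω²)⁻¹`, with `ω` the unique zero of `x ↦ 2 cotan(bx) + 1/x` on `(0, π/b)`,
saturated by `f(x) = e^{|x|/2} sin(ωx)`. -/
theorem stmt12 (b : ℝ) (hb : 0 < b) (ν μ : Measure ℝ)
    (hν : ν = MeasureTheory.volume.withDensity fun t =>
      ENNReal.ofReal ((1/2) * Real.exp (-|t|)))
    (hμ : μ = (ν (Set.Icc (-b) b))⁻¹ • ν.restrict (Set.Icc (-b) b))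
    (ω : ℝ) (hω : ω ∈ Set.Ioo 0 (Real.pi / b))
    (hzero : 2 * (Real.cos (b * ω) / Real.sin (b * ω)) + 1/ω = 0)
    (C : ℝ) (hC : C = (1/4 + ω^2)⁻¹)
    (f : ℝ → ℝ) (hf : ∀ x, f x = Real.exp (|x|/2) * Real.sin (ω * x)) :
    (∀ x ∈ Set.Ioo 0 (Real.pi / b),
      2 * (Real.cos (b * x) / Real.sin (b * x)) + 1/x = 0 → x = ω) ∧
    PoincareOn μ (Set.Ioo (-b) b) C ∧
    (∀ C', 0 ≤ C' → PoincareOn μ (Set.Ioo (-b) b) C' → C ≤ C') ∧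
    (∫ x, f x ∂μ = 0) ∧
    (∫ x, (f x)^2 ∂μ = C * ∫ x, (deriv f x)^2 ∂μ) := by
  obtain ⟨k, hk, hμ_integral, hμ_integrable⟩ := doubleExp_restrict_integral hb hν hμ
  have hωb : ω * b < π := (lt_div_iff₀ hb).1 hω.2
  have hsb : 0 < sin (b * ω) := sin_pos_of_pos_of_lt_pi (mul_pos hb hω.1) (by linarith)
  have hneu : sin (ω * b) + 2 * ω * cos (ω * b) = 0 := by
    have hω0 := hω.1.ne'
    have hs0 := hsb.ne'
    field_simp at hzero
    rw [mul_comm ω b]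
    linarith
  have hbb : -b ≤ b := by linarith
  have hlam : 0 < 1 / 4 + ω ^ 2 := by positivity
  have hbdd : ∀ g : ℝ → ℝ, BddBelow (Set.range fun a : ℝ => ∫ x, (g x - a) ^ 2 ∂μ) := fun g =>
    ⟨0, by rintro _ ⟨a, rfl⟩; exact integral_nonneg fun x => sq_nonneg _⟩
  obtain rfl : f = fun x => exp (|x| / 2) * sin (ω * x) := funext hf
  set f' : ℝ → ℝ := fun x => exp (|x| / 2) * (sin (ω * |x|) / 2 + ω * cos (ω * x)) with hf'
  have hderiv : ∀ x, HasDerivAt (fun x => exp (|x| / 2) * sin (ω * x)) (f' x) x :=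
    hasDerivAt_exp_abs_mul_sin ω
  have hcancel : ∀ x : ℝ, exp (|x| / 2) ^ 2 * exp (-|x|) = 1 := fun x => by
    rw [← exp_nat_mul, ← exp_add, ← exp_zero]
    push_cast
    ring_nf
  have hsq : ∀ x, (exp (|x| / 2) * sin (ω * x)) ^ 2 * exp (-|x|) = sin (ω * x) ^ 2 := fun x => by
    linear_combination sin (ω * x) ^ 2 * hcancel x
  have hsq' : ∀ x, f' x ^ 2 * exp (-|x|) = (sin (ω * |x|) / 2 + ω * cos (ω * x)) ^ 2 := fun x => by
    linear_combination (sin (ω * |x|) / 2 + ω * cos (ω * x)) ^ 2 * hcancel x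
  have hodd : ∫ x in (-b)..b, exp (|x| / 2) * sin (ω * x) * exp (-|x|) = 0 :=
    integral_symm_eq_zero_of_odd (fun x => by rw [abs_neg, mul_neg, sin_neg]; ring) b
  have hsat : ∫ x, (exp (|x| / 2) * sin (ω * x)) ^ 2 ∂μ = C * ∫ x, f' x ^ 2 ∂μ := by
    rw [hμ_integral, hμ_integral, hC]
    simp only [hsq, hsq']
    rw [← integral_sq_sin_eq hb.le hneu]
    field_simp
  refine ⟨fun x hx hx0 => two_cot_add_inv_zero_unique hb hx hω hx0 hzero, ?_, ?_, ?_, ?_⟩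
  · intro g g' hg hgi hgi'
    refine (ciInf_le (hbdd g) (g 0)).trans ?_
    rw [hμ_integral, hμ_integral, hC, inv_mul_eq_div, le_div_iff₀ hlam]
    have := mul_le_mul_of_nonneg_left (poincare_exp_abs_weight hb hω.1 hωb hneu hg
      ((hμ_integrable _).1 hgi) ((hμ_integrable _).1 hgi')) hk.le
    linarith
  · intro C' _ hC'
    have hP := hC' _ f' (fun x _ => hderiv x)
      ((hμ_integrable _).2 (Continuous.intervalIntegrable (by fun_prop) _ _))
      ((hμ_integrable _).2 (Continuous.intervalIntegrable (by fun_prop) _ _))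
    have hVar : ∫ x, (exp (|x| / 2) * sin (ω * x)) ^ 2 ∂μ ≤
        Var μ fun x => exp (|x| / 2) * sin (ω * x) := by
      refine le_ciInf fun a => ?_
      rw [hμ_integral, hμ_integral]
      refine mul_le_mul_of_nonneg_left ?_ hk.le
      have hexpand : ∀ x : ℝ, (exp (|x| / 2) * sin (ω * x) - a) ^ 2 * exp (-|x|) =
          (exp (|x| / 2) * sin (ω * x)) ^ 2 * exp (-|x|) -
            2 * a * (exp (|x| / 2) * sin (ω * x) * exp (-|x|)) + a ^ 2 * exp (-|x|) :=
        fun x => by ring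
      simp only [hexpand]
      rw [intervalIntegral.integral_add (Continuous.intervalIntegrable (by fun_prop) _ _)
          (Continuous.intervalIntegrable (by fun_prop) _ _),
        intervalIntegral.integral_sub (Continuous.intervalIntegrable (by fun_prop) _ _)
          (Continuous.intervalIntegrable (by fun_prop) _ _),
        intervalIntegral.integral_const_mul, hodd]
      have : 0 ≤ ∫ x in (-b)..b, a ^ 2 * exp (-|x|) :=
        intervalIntegral.integral_nonneg hbb fun x _ => by positivity
      linarith
    have hpos : 0 < ∫ x, f' x ^ 2 ∂μ := by
      rw [hμ_integral]
      refine mul_pos hk (intervalIntegral.integral_pos (by linarith)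
        (Continuous.continuousOn (by fun_prop)) (fun x _ => by positivity)
        ⟨0, ⟨by linarith, hb.le⟩, ?_⟩)
      simpa [hf'] using pow_pos hω.1 2
    rw [hsat] at hVar
    exact le_of_mul_le_mul_right (hVar.trans hP) hpos
  · rw [hμ_integral, hodd, mul_zero]
  · rw [hsat, show deriv _ = f' from funext fun x => (hderiv x).deriv]
end

section
/- The triangular distribution on [−1,1] with density ρ(t) = 1 − |t| has optimal Poincaré constant r₁^{−2} ≈ 0.1729, where r₁ is the first positive zero of the Bessel function J₀ of the first kind of order 0. The inequality is saturated by f(x) = sign(x)·J₀(r₁(1−|x|)). -/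
open MeasureTheory Real Set

/-- The Bessel function of the first kind of order 0, `J₀(x) = Σ (-1)^k (x/2)^{2k} / (k!)²`. -/
noncomputable def besselJ0 (x : ℝ) : ℝ :=
  ∑' k : ℕ, (-1)^k * (x/2)^(2*k) / ((Nat.factorial k : ℝ))^2

section PowerSeries

theorem summable_of_abs_le_inv_factorial {c : ℕ → ℝ} (hc : ∀ k, |c k| ≤ 1 / (k.factorial : ℝ))
    (z : ℝ) : Summable fun k => c k * z ^ k := by
  refine Summable.of_norm_bounded (Real.summable_pow_div_factorial |z|) fun k => ?_
  rw [norm_mul, norm_pow, Real.norm_eq_abs, Real.norm_eq_abs]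
  calc |c k| * |z| ^ k ≤ 1 / (k.factorial : ℝ) * |z| ^ k := by gcongr; exact hc k
    _ = |z| ^ k / k.factorial := by ring

theorem abs_succ_mul_le_inv_factorial {c : ℕ → ℝ} (hc : ∀ k, |c k| ≤ 1 / (k.factorial : ℝ))
    (k : ℕ) : |((k : ℝ) + 1) * c (k + 1)| ≤ 1 / (k.factorial : ℝ) := by
  have hk : (0 : ℝ) < (k : ℝ) + 1 := by positivity
  rw [abs_mul, abs_of_pos hk]
  calc ((k : ℝ) + 1) * |c (k + 1)| ≤ ((k : ℝ) + 1) * (1 / ((k + 1).factorial : ℝ)) := by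
        gcongr; exact hc _
    _ = 1 / (k.factorial : ℝ) := by
        rw [Nat.factorial_succ]; push_cast; field_simp

theorem hasDerivAt_tsum_pow {c : ℕ → ℝ} (hc : ∀ k, |c k| ≤ 1 / (k.factorial : ℝ)) (z : ℝ) :
    HasDerivAt (fun z => ∑' k, c k * z ^ k) (∑' k : ℕ, ((k : ℝ) + 1) * c (k + 1) * z ^ k) z := by
  set R := |z| + 1
  have hR : 0 < R := by positivity
  have hu : Summable fun k : ℕ => 1 / (k.factorial : ℝ) * (k * R ^ (k - 1)) := by
    rw [← summable_nat_add_iff 1]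
    refine (Real.summable_pow_div_factorial R).congr fun k => ?_
    rw [Nat.factorial_succ, Nat.add_sub_cancel]
    push_cast
    field_simp
  have hb : ∀ (k : ℕ), ∀ y ∈ Metric.ball (0 : ℝ) R, ‖c k * (k * y ^ (k - 1))‖ ≤
      1 / (k.factorial : ℝ) * (k * R ^ (k - 1)) := by
    intro k y hy
    have hy' : |y| ≤ R := by simpa using (mem_ball_zero_iff.1 hy).le
    rw [norm_mul, norm_mul, norm_pow, Real.norm_eq_abs, Real.norm_eq_abs, Real.norm_eq_abs,
      Nat.abs_cast]
    gcongr
    exact hc k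
  have hz : z ∈ Metric.ball (0 : ℝ) R := by simp [R]
  have key := hasDerivAt_tsum_of_isPreconnected (g := fun k z => c k * z ^ k) hu
    Metric.isOpen_ball (convex_ball (0 : ℝ) R).isPreconnected
    (fun k y _ => (hasDerivAt_pow k y).const_mul (c k)) hb hz
    (summable_of_abs_le_inv_factorial hc z) hz
  convert! key using 1
  rw [(Summable.of_norm_bounded hu fun k => hb k z hz).tsum_eq_zero_add]
  simp only [Nat.cast_zero, zero_mul, mul_zero, zero_add, Nat.add_sub_cancel]
  refine tsum_congr fun k => ?_
  push_cast
  ring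

end PowerSeries

/-- `J₀(x) = A(x²)` for an entire function `A` solving `(z A'(z))' = -A(z) / 4`. -/
theorem exists_besselJ0_eq_comp_sq : ∃ A D : ℝ → ℝ, (∀ x, besselJ0 x = A (x ^ 2)) ∧
    (∀ z, HasDerivAt A (D z) z) ∧ Continuous D ∧
    ∀ z, HasDerivAt (fun z => z * D z) (-A z / 4) z := by
  set c : ℕ → ℝ := fun k => (-1 / 4) ^ k / (k.factorial : ℝ) ^ 2 with hcdef
  have hfac : ∀ k : ℕ, (1 : ℝ) ≤ k.factorial := fun k => by
    exact_mod_cast Nat.one_le_iff_ne_zero.2 k.factorial_ne_zero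
  have habs : ∀ k, |c k| = (1 / 4) ^ k / (k.factorial : ℝ) ^ 2 := fun k => by
    simp [hcdef, abs_div, abs_pow]
  have hquarter : ∀ k : ℕ, (1 / 4 : ℝ) ^ k ≤ 1 := fun k => pow_le_one₀ (by norm_num) (by norm_num)
  have hc : ∀ k, |c k| ≤ 1 / (k.factorial : ℝ) := by
    intro k
    have := hfac k
    rw [habs, div_le_div_iff₀ (by positivity) (by positivity)]
    nlinarith [hquarter k]
  have hkc : ∀ k : ℕ, |(k : ℝ) * c k| ≤ 1 / (k.factorial : ℝ) := by
    intro k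
    have h1 := hfac k
    have h2 : (k : ℝ) ≤ k.factorial := by exact_mod_cast k.self_le_factorial
    rw [abs_mul, Nat.abs_cast, habs, ← mul_div_assoc, div_le_div_iff₀ (by positivity) (by positivity)]
    have h3 : (k : ℝ) * (1 / 4) ^ k ≤ k.factorial :=
      (mul_le_of_le_one_right (by positivity) (hquarter k)).trans h2
    nlinarith
  have hrec : ∀ k : ℕ, ((k : ℝ) + 1) * (((k + 1 : ℕ) : ℝ) * c (k + 1)) = -1 / 4 * c k := by
    intro k
    simp only [hcdef, Nat.factorial_succ]
    push_cast
    field_simp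
    ring
  have hD := abs_succ_mul_le_inv_factorial hc
  refine ⟨fun z => ∑' k, c k * z ^ k, fun z => ∑' k : ℕ, ((k : ℝ) + 1) * c (k + 1) * z ^ k,
    fun x => ?_, hasDerivAt_tsum_pow hc, ?_, fun z => ?_⟩
  · refine tsum_congr fun k => ?_
    simp only [hcdef, div_pow, pow_mul]
    norm_num
    ring
  · exact continuous_iff_continuousAt.2 fun z => (hasDerivAt_tsum_pow hD z).continuousAt
  · have hB : (fun z : ℝ => z * ∑' k : ℕ, ((k : ℝ) + 1) * c (k + 1) * z ^ k) =
        fun z => ∑' k : ℕ, ((k : ℝ) * c k) * z ^ k := by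
      funext z
      rw [(summable_of_abs_le_inv_factorial hkc z).tsum_eq_zero_add, ← tsum_mul_left]
      simp only [Nat.cast_zero, zero_mul, zero_add]
      refine tsum_congr fun k => ?_
      push_cast
      ring
    rw [hB]
    convert! hasDerivAt_tsum_pow hkc z using 1
    simp only [hrec, mul_assoc, tsum_mul_left]
    ring

theorem besselJ0_zero : besselJ0 0 = 1 := by
  rw [besselJ0, tsum_eq_single 0 fun k hk => by simp [hk]]
  simp

/-- The profile `u(x) = J₀(r (1 - x))` up to the first zero `r` of `J₀`, with its derivative `d`
and the Sturm-Liouville equation it solves. -/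
theorem exists_deriv_besselJ0_profile {r : ℝ} (hr : 0 < r) (hzero : besselJ0 r = 0)
    (hfirst : ∀ x ∈ Set.Ioo (0 : ℝ) r, besselJ0 x ≠ 0) :
    ∃ u d : ℝ → ℝ, (∀ x, u x = besselJ0 (r * (1 - x))) ∧ (∀ x, HasDerivAt u (d x) x) ∧
      Continuous d ∧ (∀ x, HasDerivAt (fun x => (1 - x) * d x) (-r ^ 2 * (1 - x) * u x) x) ∧
      u 0 = 0 ∧ (∀ x ∈ Ioc (0 : ℝ) 1, 0 < u x) ∧ ∀ x ∈ Ico (0 : ℝ) 1, 0 < d x := by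
  obtain ⟨A, D, hA, hAD, hDc, hB⟩ := exists_besselJ0_eq_comp_sq
  have hAc : Continuous A := continuous_iff_continuousAt.2 fun z => (hAD z).continuousAt
  have hin : ∀ x : ℝ, HasDerivAt (fun x : ℝ => (r * (1 - x)) ^ 2) (-2 * r ^ 2 * (1 - x)) x := by
    intro x
    convert! (((hasDerivAt_id x).const_sub 1).const_mul r).pow 2 using 1
    simp
    ring
  set u : ℝ → ℝ := fun x => A ((r * (1 - x)) ^ 2) with hu
  set d : ℝ → ℝ := fun x => D ((r * (1 - x)) ^ 2) * (-2 * r ^ 2 * (1 - x)) with hd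
  have huJ : ∀ x, u x = besselJ0 (r * (1 - x)) := fun x => (hA _).symm
  have hud : ∀ x, HasDerivAt u (d x) x := fun x => (hAD _).comp x (hin x)
  have huc : Continuous u := by fun_prop
  have hdc : Continuous d := by fun_prop
  have hp : ∀ x, HasDerivAt (fun x => (1 - x) * d x) (-r ^ 2 * (1 - x) * u x) x := by
    intro x
    convert! ((hB ((r * (1 - x)) ^ 2)).comp x (hin x)).const_mul (-2) using 1
    · funext y
      simp only [hd, Function.comp]
      ring
    · simp only [hu]
      ring
  have hu0 : u 0 = 0 := by rw [huJ]; simpa using hzero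
  have hu1 : u 1 = 1 := by rw [huJ]; simpa using besselJ0_zero
  have hune : ∀ x ∈ Ioc (0 : ℝ) 1, u x ≠ 0 := by
    intro x hx
    rcases hx.2.eq_or_lt with rfl | h
    · simp [hu1]
    · rw [huJ]
      refine hfirst _ ⟨mul_pos hr (by linarith), ?_⟩
      nlinarith [hx.1]
  have hupos : ∀ x ∈ Ioc (0 : ℝ) 1, 0 < u x := by
    intro x hx
    by_contra! h
    obtain ⟨y, hy, hy0⟩ := intermediate_value_Icc hx.2 huc.continuousOn
      (show (0 : ℝ) ∈ Icc (u x) (u 1) from ⟨h, by simp [hu1]⟩)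
    exact hune y ⟨hx.1.trans_le hy.1, hy.2⟩ hy0
  have hanti : StrictAntiOn (fun x => (1 - x) * d x) (Icc 0 1) := by
    refine strictAntiOn_of_deriv_neg (convex_Icc 0 1) (by fun_prop) fun x hx => ?_
    rw [interior_Icc] at hx
    rw [(hp x).deriv]
    have h1 := hupos x ⟨hx.1, hx.2.le⟩
    have h2 : 0 < 1 - x := by linarith [hx.2]
    have : 0 < r ^ 2 * (1 - x) * u x := by positivity
    linarith
  refine ⟨u, d, huJ, hud, hdc, hp, hu0, hupos, fun x hx => ?_⟩
  have := hanti ⟨hx.1, hx.2.le⟩ (right_mem_Icc.2 zero_le_one) hx.2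
  simp only [sub_self, zero_mul] at this
  exact pos_of_mul_pos_right this (by linarith [hx.2])

/-- A Hardy-type inequality on a half interval, by Picone's identity with the positive
solution `u` of `((1 - x) u')' = -K (1 - x) u`. -/
theorem mul_integral_sq_le_of_profile {K : ℝ} {u d : ℝ → ℝ} (hud : ∀ x, HasDerivAt u (d x) x)
    (hp : ∀ x, HasDerivAt (fun x => (1 - x) * d x) (-K * (1 - x) * u x) x)
    (hu0 : u 0 = 0) (hupos : ∀ x ∈ Ioc (0 : ℝ) 1, 0 < u x) (hdpos : ∀ x ∈ Ico (0 : ℝ) 1, 0 < d x)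
    {h h' : ℝ → ℝ} (hh : ∀ x ∈ Ico (0 : ℝ) 1, HasDerivAt h (h' x) x) (h0 : h 0 = 0)
    (hi : IntegrableOn (fun x => (1 - x) * h x ^ 2) (Icc 0 1))
    (hi' : IntegrableOn (fun x => (1 - x) * h' x ^ 2) (Icc 0 1)) :
    K * ∫ x in (0:ℝ)..1, (1 - x) * h x ^ 2 ≤ ∫ x in (0:ℝ)..1, (1 - x) * h' x ^ 2 := by
  have hφi : IntegrableOn (fun x => (1 - x) * h' x ^ 2 - K * ((1 - x) * h x ^ 2)) (Icc 0 1) :=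
    hi'.sub (hi.const_mul K)
  have hw : ∀ x ∈ Ioo (0 : ℝ) 1, HasDerivAt (fun x => (1 - x) * d x * (h x ^ 2 / u x))
      ((-K * (1 - x) * u x) * (h x ^ 2 / u x) + (1 - x) * d x *
        ((2 * h x * h' x * u x - h x ^ 2 * d x) / u x ^ 2)) x := by
    intro x hx
    have hux := (hupos x ⟨hx.1, hx.2.le⟩).ne'
    have h1 := (hh x ⟨hx.1.le, hx.2⟩).pow 2
    convert! (hp x).mul (h1.div (hud x) hux) using 1
    simp
  have hw0 : ContinuousWithinAt (fun x => (1 - x) * d x * (h x ^ 2 / u x)) (Ici 0) 0 := by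
    rw [← continuousWithinAt_Ioi_iff_Ici]
    have hs := (hh 0 ⟨le_rfl, one_pos⟩).tendsto_slope_zero_right
    have hus := (hud 0).tendsto_slope_zero_right
    simp only [zero_add, h0, hu0, sub_zero, smul_eq_mul] at hs hus
    have hcont := (hh 0 ⟨le_rfl, one_pos⟩).continuousAt.tendsto.mono_left
      (nhdsWithin_le_nhds (s := Ioi 0))
    have hpc : Filter.Tendsto (fun x => (1 - x) * d x) (nhdsWithin 0 (Ioi 0))
        (nhds ((1 - 0) * d 0)) := (hp 0).continuousAt.tendsto.mono_left nhdsWithin_le_nhds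
    have hd0 : d 0 ≠ 0 := (hdpos 0 ⟨le_rfl, one_pos⟩).ne'
    have := hpc.mul ((hs.mul hcont).mul (hus.inv₀ hd0))
    rw [ContinuousWithinAt]
    simp only [hu0, div_zero, mul_zero, h0, zero_mul] at this ⊢
    refine this.congr' ?_
    filter_upwards [self_mem_nhdsWithin] with x hx
    have hx' : x ≠ 0 := (mem_Ioi.1 hx).ne'
    rw [mul_inv, inv_inv]
    field_simp
  have hb : ∀ b ∈ Ioo (0 : ℝ) 1,
      0 ≤ ∫ x in (0:ℝ)..b, ((1 - x) * h' x ^ 2 - K * ((1 - x) * h x ^ 2)) := by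
    intro b hb
    have hcont : ContinuousOn (fun x => (1 - x) * d x * (h x ^ 2 / u x)) (Icc 0 b) := by
      intro x hx
      rcases hx.1.eq_or_lt with rfl | hx0
      · exact hw0.mono Icc_subset_Ici_self
      · exact (hw x ⟨hx0, hx.2.trans_lt hb.2⟩).continuousAt.continuousWithinAt
    have key := intervalIntegral.sub_le_integral_of_hasDeriv_right_of_le hb.1.le hcont
      (fun x hx => (hw x ⟨hx.1, hx.2.trans hb.2⟩).hasDerivWithinAt)
      (hφi.mono_set (Icc_subset_Icc_right hb.2.le)) ?_
    · refine le_trans ?_ key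
      simp only [hu0, div_zero, mul_zero, sub_zero]
      have h1 := hupos b ⟨hb.1, hb.2.le⟩
      have h2 := hdpos b ⟨hb.1.le, hb.2⟩
      have h3 : 0 < 1 - b := by linarith [hb.2]
      positivity
    · intro x hx
      have hux := hupos x ⟨hx.1, hx.2.le.trans hb.2.le⟩
      have h1x : 0 ≤ 1 - x := by linarith [hx.2, hb.2]
      have : 0 ≤ (1 - x) * (h' x - d x / u x * h x) ^ 2 := by positivity
      refine sub_nonneg.1 (this.trans_eq ?_)
      field_simp
      ring
  have hprim := intervalIntegral.continuousOn_primitive_interval (a := (0:ℝ)) (b := 1)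
    (by rwa [uIcc_of_le zero_le_one])
  rw [uIcc_of_le zero_le_one] at hprim
  have hlim := (hprim 1 (right_mem_Icc.2 zero_le_one)).mono Ioo_subset_Icc_self
  have : (nhdsWithin (1:ℝ) (Ioo 0 1)).NeBot := by
    rw [nhdsWithin_Ioo_eq_nhdsLT one_pos]; infer_instance
  have hnn := ge_of_tendsto hlim (by filter_upwards [self_mem_nhdsWithin] with b h using hb b h)
  have hI : ∀ {g : ℝ → ℝ}, IntegrableOn g (Icc 0 1) → IntervalIntegrable g volume 0 1 :=
    fun hg => (intervalIntegrable_iff_integrableOn_Icc_of_le zero_le_one).2 hg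
  beta_reduce at hnn
  rw [intervalIntegral.integral_sub (hI hi') (hI (hi.const_mul K)),
    intervalIntegral.integral_const_mul] at hnn
  linarith

/-- The weighted energy identity for a solution of `((1 - x) u')' = -K (1 - x) u`. -/
theorem integral_deriv_sq_eq_of_profile {K : ℝ} {u d : ℝ → ℝ} (hud : ∀ x, HasDerivAt u (d x) x)
    (hdc : Continuous d)
    (hp : ∀ x, HasDerivAt (fun x => (1 - x) * d x) (-K * (1 - x) * u x) x) (hu0 : u 0 = 0) :
    ∫ x in (0:ℝ)..1, (1 - x) * d x ^ 2 = K * ∫ x in (0:ℝ)..1, (1 - x) * u x ^ 2 := by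
  have huc : Continuous u := continuous_iff_continuousAt.2 fun x => (hud x).continuousAt
  have key := intervalIntegral.integral_eq_sub_of_hasDerivAt (a := 0) (b := 1)
    (fun x _ => (hp x).mul (hud x)) (by apply Continuous.intervalIntegrable; fun_prop)
  have e : ∀ x, -K * (1 - x) * u x * u x + (1 - x) * d x * d x =
      (1 - x) * d x ^ 2 - K * ((1 - x) * u x ^ 2) := fun x => by ring
  simp only [e] at key
  rw [intervalIntegral.integral_sub (by apply Continuous.intervalIntegrable; fun_prop)
    (by apply Continuous.intervalIntegrable; fun_prop), intervalIntegral.integral_const_mul] at key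
  simp [hu0] at key
  linarith

section Triangular

/-- The triangular distribution on `[-1, 1]`. -/
noncomputable def triangular : Measure ℝ :=
  volume.withDensity fun t => ENNReal.ofReal (Set.indicator (Set.Icc (-1:ℝ) 1) (fun s => 1 - |s|) t)

theorem measurable_triangular_density :
    Measurable fun t => ENNReal.ofReal (Set.indicator (Set.Icc (-1:ℝ) 1) (fun s => 1 - |s|) t) :=
  ((by fun_prop : Measurable fun s : ℝ => 1 - |s|).indicator measurableSet_Icc).ennreal_ofReal

theorem triangular_density_smul (g : ℝ → ℝ) :
    (fun t => (ENNReal.ofReal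
      (Set.indicator (Set.Icc (-1:ℝ) 1) (fun s => 1 - |s|) t)).toReal • g t) =
    Set.indicator (Set.Icc (-1:ℝ) 1) (fun t => (1 - |t|) * g t) := by
  funext t
  by_cases ht : t ∈ Icc (-1:ℝ) 1
  · rw [indicator_of_mem ht, indicator_of_mem ht, ENNReal.toReal_ofReal, smul_eq_mul]
    linarith [abs_le.2 ht]
  · simp [indicator_of_notMem ht]

theorem integrable_triangular_iff {g : ℝ → ℝ} :
    Integrable g triangular ↔ IntegrableOn (fun t => (1 - |t|) * g t) (Icc (-1) 1) := by
  rw [triangular, integrable_withDensity_iff_integrable_smul' measurable_triangular_density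
    (by simp), triangular_density_smul, integrable_indicator_iff measurableSet_Icc]

theorem Continuous.integrable_triangular {g : ℝ → ℝ} (hg : Continuous g) :
    Integrable g triangular :=
  integrable_triangular_iff.2 (by fun_prop : Continuous fun t => (1 - |t|) * g t).integrableOn_Icc

instance : IsFiniteMeasure triangular :=
  (integrable_const_iff_isFiniteMeasure (one_ne_zero (α := ℝ))).1
    (continuous_const.integrable_triangular)

theorem integral_triangular (g : ℝ → ℝ) :
    ∫ t, g t ∂triangular = ∫ t in Icc (-1:ℝ) 1, (1 - |t|) * g t := by
  rw [triangular, integral_withDensity_eq_integral_toReal_smul measurable_triangular_density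
    (by simp), triangular_density_smul, integral_indicator measurableSet_Icc]

theorem integral_triangular_comp_neg (g : ℝ → ℝ) :
    ∫ t, g (-t) ∂triangular = ∫ t, g t ∂triangular := by
  simp only [integral_triangular, integral_Icc_eq_integral_Ioc,
    ← intervalIntegral.integral_of_le (show (-1:ℝ) ≤ 1 by norm_num)]
  simpa using intervalIntegral.integral_comp_neg (a := -1) (b := 1) fun t => (1 - |t|) * g t

theorem integrableOn_of_integrable_triangular {g : ℝ → ℝ} (hg : Integrable g triangular) :
    IntegrableOn (fun t => (1 - t) * g t) (Icc 0 1) := by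
  refine ((integrable_triangular_iff.1 hg).mono_set
    (Icc_subset_Icc_left (by norm_num))).congr_fun (fun t ht => ?_) measurableSet_Icc
  simp only [abs_of_nonneg ht.1]

theorem integrable_triangular_comp_neg {g : ℝ → ℝ} (hg : Integrable g triangular) :
    Integrable (fun t => g (-t)) triangular := by
  rw [integrable_triangular_iff, ← intervalIntegrable_iff_integrableOn_Icc_of_le (by norm_num)]
    at hg ⊢
  simpa using ((IntervalIntegrable.iff_comp_neg (by simp)).1 hg).symm

theorem integral_triangular_eq_add {g : ℝ → ℝ} (hg : Integrable g triangular) :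
    ∫ t, g t ∂triangular =
      (∫ t in (0:ℝ)..1, (1 - t) * g t) + ∫ t in (0:ℝ)..1, (1 - t) * g (-t) := by
  have h1 := integrable_triangular_iff.1 hg
  have hI : ∀ {a b : ℝ}, a ≤ b → Icc a b ⊆ Icc (-1) 1 →
      IntervalIntegrable (fun t => (1 - |t|) * g t) volume a b := fun hab hs =>
    (intervalIntegrable_iff_integrableOn_Icc_of_le hab).2 (h1.mono_set hs)
  rw [integral_triangular, integral_Icc_eq_integral_Ioc,
    ← intervalIntegral.integral_of_le (by norm_num),
    ← intervalIntegral.integral_add_adjacent_intervals (b := 0)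
      (hI (by norm_num) (Icc_subset_Icc_right (by norm_num)))
      (hI (by norm_num) (Icc_subset_Icc_left (by norm_num))), add_comm]
  have h2 := intervalIntegral.integral_comp_neg (a := 0) (b := 1) fun t => (1 - |t|) * g t
  rw [neg_zero] at h2
  rw [← h2]
  congr 1 <;> refine intervalIntegral.integral_congr fun t ht => ?_ <;>
    rw [uIcc_of_le zero_le_one] at ht <;> simp [abs_of_nonneg ht.1]

end Triangular

theorem bddBelow_var (μ : Measure ℝ) (f : ℝ → ℝ) :
    BddBelow (range fun a : ℝ => ∫ x, (f x - a) ^ 2 ∂μ) :=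
  ⟨0, by rintro _ ⟨a, rfl⟩; exact integral_nonneg fun x => sq_nonneg _⟩

theorem poincareOn_triangular_of_profile {K : ℝ} (hK : 0 < K) {u d : ℝ → ℝ}
    (hud : ∀ x, HasDerivAt u (d x) x)
    (hp : ∀ x, HasDerivAt (fun x => (1 - x) * d x) (-K * (1 - x) * u x) x)
    (hu0 : u 0 = 0) (hupos : ∀ x ∈ Ioc (0 : ℝ) 1, 0 < u x)
    (hdpos : ∀ x ∈ Ico (0 : ℝ) 1, 0 < d x) :
    PoincareOn triangular (Ioo (-1) 1) K⁻¹ := by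
  intro f f' hf _ hf'
  suffices hsuff : ∫ x, (f x - f 0) ^ 2 ∂triangular ≤ K⁻¹ * ∫ x, f' x ^ 2 ∂triangular from
    (ciInf_le (bddBelow_var triangular f) (f 0)).trans hsuff
  by_cases hi : Integrable (fun x => (f x - f 0) ^ 2) triangular
  swap
  · rw [integral_undef hi]
    exact mul_nonneg (inv_nonneg.2 hK.le) (integral_nonneg fun x => sq_nonneg _)
  have hi_neg : Integrable (fun x => (f (-x) - f 0) ^ 2) triangular :=
    integrable_triangular_comp_neg (g := fun x => (f x - f 0) ^ 2) hi
  have hf'_neg : Integrable (fun x => (-f' (-x)) ^ 2) triangular := by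
    simpa only [neg_sq] using integrable_triangular_comp_neg (g := fun x => f' x ^ 2) hf'
  have hder : ∀ x ∈ Ico (0 : ℝ) 1, HasDerivAt (fun x => f x - f 0) (f' x) x := fun x hx =>
    (hf x ⟨by linarith [hx.1], hx.2⟩).sub_const _
  have hder_neg : ∀ x ∈ Ico (0 : ℝ) 1, HasDerivAt (fun x => f (-x) - f 0) (-f' (-x)) x := by
    intro x hx
    have := (hf (-x) ⟨by linarith [hx.2], by linarith [hx.1]⟩).comp x (hasDerivAt_neg x)
    convert! this.sub_const (f 0) using 1
    simp
  have h1 := mul_integral_sq_le_of_profile hud hp hu0 hupos hdpos hder (sub_self _)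
    (integrableOn_of_integrable_triangular hi) (integrableOn_of_integrable_triangular hf')
  have h2 := mul_integral_sq_le_of_profile hud hp hu0 hupos hdpos hder_neg (by simp)
    (integrableOn_of_integrable_triangular hi_neg) (integrableOn_of_integrable_triangular hf'_neg)
  rw [integral_triangular_eq_add hi, integral_triangular_eq_add hf', le_inv_mul_iff₀ hK, mul_add]
  simp only [neg_sq] at h2
  exact add_le_add h1 h2

/-- The odd extension of a differentiable function vanishing at the origin is differentiable. -/
theorem hasDerivAt_sign_mul_comp_abs {u d : ℝ → ℝ} (hud : ∀ x, HasDerivAt u (d x) x)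
    (hu0 : u 0 = 0) (x : ℝ) : HasDerivAt (fun x => Real.sign x * u |x|) (d |x|) x := by
  have hneg : ∀ x, HasDerivAt (fun x => -u (-x)) (d (-x)) x := fun x => by
    convert! ((hud (-x)).comp x (hasDerivAt_neg x)).neg using 1
    simp
  have hpos_eq : ∀ y, 0 ≤ y → Real.sign y * u |y| = u y := by
    intro y hy
    rcases hy.eq_or_lt with rfl | hy'
    · simp [hu0]
    · rw [Real.sign_of_pos hy', abs_of_pos hy', one_mul]
  have hneg_eq : ∀ y, y ≤ 0 → Real.sign y * u |y| = -u (-y) := by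
    intro y hy
    rcases hy.eq_or_lt with rfl | hy'
    · simp [hu0]
    · rw [Real.sign_of_neg hy', abs_of_neg hy', neg_one_mul]
  rcases lt_trichotomy x 0 with hx | rfl | hx
  · rw [abs_of_neg hx]
    refine (hneg x).congr_of_eventuallyEq ?_
    filter_upwards [Iio_mem_nhds hx] with y hy using hneg_eq y (le_of_lt hy)
  · have h1 : HasDerivWithinAt (fun x => Real.sign x * u |x|) (d |0|) (Ici 0) 0 := by
      rw [abs_zero]
      exact (hud 0).hasDerivWithinAt.congr hpos_eq (hpos_eq 0 le_rfl)
    have h2 : HasDerivWithinAt (fun x => Real.sign x * u |x|) (d |0|) (Iic 0) 0 := by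
      have := (hneg 0).hasDerivWithinAt.congr (s := Iic 0) hneg_eq (hneg_eq 0 le_rfl)
      simpa using this
    exact (h2.union h1).hasDerivAt (by rw [Iic_union_Ici]; exact Filter.univ_mem)
  · rw [abs_of_pos hx]
    refine (hud x).congr_of_eventuallyEq ?_
    filter_upwards [Ioi_mem_nhds hx] with y hy using hpos_eq y (le_of_lt hy)

theorem var_eq_of_integral_eq_zero {μ : Measure ℝ} [IsFiniteMeasure μ] {f : ℝ → ℝ}
    (hf : Integrable f μ) (hf2 : Integrable (fun x => f x ^ 2) μ) (h0 : ∫ x, f x ∂μ = 0) :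
    Var μ f = ∫ x, f x ^ 2 ∂μ := by
  refine le_antisymm ((ciInf_le (bddBelow_var μ f) 0).trans_eq (by simp)) (le_ciInf fun a => ?_)
  have e : ∀ x, (f x - a) ^ 2 = f x ^ 2 - 2 * a * f x + a ^ 2 := fun x => by ring
  simp only [e]
  have hlin : Integrable (fun x => 2 * a * f x) μ := hf.const_mul _
  have hsub : Integrable (fun x => f x ^ 2 - 2 * a * f x) μ := hf2.sub hlin
  rw [integral_add hsub (integrable_const _), integral_sub hf2 hlin, integral_const_mul, h0, mul_zero, sub_zero]
  exact le_add_of_nonneg_right (integral_nonneg fun x => sq_nonneg a)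

/-- the triangular distribution on `[-1,1]` has optimal Poincaré constant
`r₁⁻²` where `r₁` is the first positive zero of `J₀`, saturated by
`f(x) = sign(x)·J₀(r₁(1-|x|))`. -/
theorem stmt13 (μ : Measure ℝ)
    (hμ : μ = MeasureTheory.volume.withDensity fun t =>
      ENNReal.ofReal (Set.indicator (Set.Icc (-1:ℝ) 1) (fun s => 1 - |s|) t))
    (r₁ : ℝ) (hr : 0 < r₁) (hzero : besselJ0 r₁ = 0)
    (hfirst : ∀ x ∈ Set.Ioo (0:ℝ) r₁, besselJ0 x ≠ 0)
    (f : ℝ → ℝ) (hf : ∀ x, f x = Real.sign x * besselJ0 (r₁ * (1 - |x|))) :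
    PoincareOn μ (Set.Ioo (-1:ℝ) 1) (r₁^2)⁻¹ ∧
    (∀ C, 0 ≤ C → PoincareOn μ (Set.Ioo (-1:ℝ) 1) C → (r₁^2)⁻¹ ≤ C) ∧
    (∫ x, f x ∂μ = 0) ∧
    (∫ x, (f x)^2 ∂μ = (r₁^2)⁻¹ * ∫ x, (deriv f x)^2 ∂μ) := by
  obtain ⟨u, d, huJ, hud, hdc, hp, hu0, hupos, hdpos⟩ :=
    exists_deriv_besselJ0_profile hr hzero hfirst
  change μ = triangular at hμ
  subst hμ
  have hK : 0 < r₁ ^ 2 := by positivity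
  have hfu : f = fun x => Real.sign x * u |x| := by
    funext x
    rw [hf, huJ]
  have hfd : ∀ x, HasDerivAt f (d |x|) x := by
    rw [hfu]
    exact hasDerivAt_sign_mul_comp_abs hud hu0
  have hfc : Continuous f := continuous_iff_continuousAt.2 fun x => (hfd x).continuousAt
  have hodd : ∀ x, f (-x) = -f x := by
    intro x
    simp [hf, Real.sign_neg]
  have hint0 : ∫ x, f x ∂triangular = 0 := by
    have := integral_triangular_comp_neg f
    simp only [hodd, integral_neg] at this
    linarith
  have hf2 : Integrable (fun x => f x ^ 2) triangular :=
    Continuous.integrable_triangular (by fun_prop)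
  have hd2 : Integrable (fun x => d |x| ^ 2) triangular :=
    Continuous.integrable_triangular (by fun_prop)
  have hfint : ∫ x, f x ^ 2 ∂triangular = 2 * ∫ x in (0:ℝ)..1, (1 - x) * u x ^ 2 := by
    have e : ∫ x in (0:ℝ)..1, (1 - x) * f x ^ 2 = ∫ x in (0:ℝ)..1, (1 - x) * u x ^ 2 := by
      refine intervalIntegral.integral_congr fun x hx => ?_
      rw [uIcc_of_le zero_le_one] at hx
      rcases hx.1.eq_or_lt with rfl | h
      · simp [hfu, hu0]
      · simp [hfu, Real.sign_of_pos h, abs_of_pos h]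
    rw [integral_triangular_eq_add hf2]
    simp only [hodd, neg_sq]
    rw [e, two_mul]
  have hdint : ∫ x, d |x| ^ 2 ∂triangular = 2 * ∫ x in (0:ℝ)..1, (1 - x) * d x ^ 2 := by
    have e : ∫ x in (0:ℝ)..1, (1 - x) * d |x| ^ 2 = ∫ x in (0:ℝ)..1, (1 - x) * d x ^ 2 := by
      refine intervalIntegral.integral_congr fun x hx => ?_
      rw [uIcc_of_le zero_le_one] at hx
      simp only [abs_of_nonneg hx.1]
    rw [integral_triangular_eq_add hd2]
    simp only [abs_neg]
    rw [e, two_mul]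
  have henergy : ∫ x, d |x| ^ 2 ∂triangular = r₁ ^ 2 * ∫ x, f x ^ 2 ∂triangular := by
    rw [hdint, hfint, integral_deriv_sq_eq_of_profile hud hdc hp hu0]
    ring
  have huc : Continuous u := continuous_iff_continuousAt.2 fun x => (hud x).continuousAt
  have hpos : 0 < ∫ x, f x ^ 2 ∂triangular := by
    rw [hfint]
    refine mul_pos two_pos (intervalIntegral.intervalIntegral_pos_of_pos_on
      (by apply Continuous.intervalIntegrable; fun_prop) (fun x hx => ?_) one_pos)
    have := hupos x ⟨hx.1, hx.2.le⟩
    have : 0 < 1 - x := by linarith [hx.2]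
    positivity
  refine ⟨poincareOn_triangular_of_profile hK hud hp hu0 hupos hdpos, fun C _ hC => ?_,
    hint0, ?_⟩
  · have h := hC f (fun x => d |x|) (fun x _ => hfd x) hf2 hd2
    rw [var_eq_of_integral_eq_zero hfc.integrable_triangular hf2 hint0, henergy,
      ← mul_assoc] at h
    rw [inv_le_iff_one_le_mul₀ hK]
    exact le_of_mul_le_mul_right (by rwa [one_mul]) hpos
  · simp only [fun x => (hfd x).deriv, henergy]
    field_simp
end

section
/- Let n ≥ 1 and x₁ < ⋯ < x_n be the roots of the n-th Hermite polynomial H_n. Let I be one of the intervals (−∞, x₁], [x₁, x₂], …, [x_{n−1}, x_n], [x_n, +∞). Then the standard Gaussian measure restricted to I has Neumann spectral gap n+1, i.e. optimal Poincaré constant 1/(n+1). -/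
open MeasureTheory Real Set

section

open Polynomial ProbabilityTheory Filter Topology

lemma derivative_hermite_succ (n : ℕ) :
    derivative (hermite (n + 1)) = ((n : ℤ[X]) + 1) * hermite n := by
  induction n with
  | zero => simp
  | succ n ih =>
    have h1 := hermite_succ n
    rw [hermite_succ (n + 1), ih]
    simp only [derivative_sub, derivative_mul, derivative_X, ih, derivative_add,
      derivative_natCast, derivative_one]
    rw [h1]
    push_cast
    ring

lemma hasDerivAt_gaussianPDFReal_standard (x : ℝ) :
    HasDerivAt (gaussianPDFReal 0 1) (-x * gaussianPDFReal 0 1 x) x := by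
  have h : HasDerivAt (fun y : ℝ => -(y - 0) ^ 2 / (2 * (1 : NNReal))) (-x) x := by
    have := (((hasDerivAt_id x).sub_const 0).pow 2).neg.div_const (2 * ((1 : NNReal) : ℝ))
    refine this.congr_deriv ?_
    simp
    ring
  have := h.exp.const_mul (√(2 * π * (1 : NNReal)))⁻¹
  rw [gaussianPDFReal_def]
  refine this.congr_deriv ?_
  simp only
  ring

lemma hasDerivAt_gaussianPDFReal_mul_eval (p : ℝ[X]) (x : ℝ) :
    HasDerivAt (fun y => gaussianPDFReal 0 1 y * p.eval y)
      (gaussianPDFReal 0 1 x * (derivative p - X * p).eval x) x := by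
  refine ((hasDerivAt_gaussianPDFReal_standard x).mul (p.hasDerivAt x)).congr_deriv ?_
  simp
  ring

lemma integrable_gaussianReal_iff (s : Set ℝ) (hs : MeasurableSet s) (g : ℝ → ℝ) :
    Integrable g ((gaussianReal 0 1).restrict s) ↔
      IntegrableOn (fun x => gaussianPDFReal 0 1 x * g x) s := by
  rw [gaussianReal_of_var_ne_zero 0 one_ne_zero, restrict_withDensity hs,
    integrable_withDensity_iff_integrable_smul' (measurable_gaussianPDF 0 1)
      (ae_of_all _ fun x => gaussianPDF_lt_top)]
  simp [toReal_gaussianPDF, IntegrableOn]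

lemma setIntegral_gaussianReal (s : Set ℝ) (hs : MeasurableSet s) (g : ℝ → ℝ) :
    ∫ x in s, g x ∂(gaussianReal 0 1) = ∫ x in s, gaussianPDFReal 0 1 x * g x := by
  rw [gaussianReal_of_var_ne_zero 0 one_ne_zero, restrict_withDensity hs,
    integral_withDensity_eq_integral_toReal_smul (measurable_gaussianPDF 0 1)
      (ae_of_all _ fun x => gaussianPDF_lt_top)]
  simp [toReal_gaussianPDF]

lemma integrable_eval_gaussianReal (p : ℝ[X]) :
    Integrable (fun x => p.eval x) (gaussianReal 0 1) := by
  simp only [eval_eq_sum_range]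
  refine integrable_finsetSum _ fun i _ => Integrable.const_mul ?_ _
  have h := (memLp_id_gaussianReal (μ := 0) (v := 1) (i : NNReal))
  rcases Nat.eq_zero_or_pos i with rfl | hi
  · simp
  · have := h.integrable_norm_pow (p := i) (by omega)
    refine Integrable.mono' this (by fun_prop) (ae_of_all _ fun x => ?_)
    simp

lemma integrable_gaussianPDFReal_mul_eval (p : ℝ[X]) :
    Integrable (fun x => gaussianPDFReal 0 1 x * p.eval x) := by
  have := (integrable_gaussianReal_iff univ MeasurableSet.univ fun x => p.eval x).1
    (by simpa using integrable_eval_gaussianReal p)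
  simpa using this

/-- The open intervals whose finite endpoints are roots of `p`. -/
def IsOpenIntervalBetweenRoots (p : ℝ[X]) (s : Set ℝ) : Prop :=
  (∃ a, p.IsRoot a ∧ s = Iio a) ∨ (∃ a, p.IsRoot a ∧ s = Ioi a) ∨
    ∃ a b, a < b ∧ p.IsRoot a ∧ p.IsRoot b ∧ s = Ioo a b

namespace IsOpenIntervalBetweenRoots

variable {p : ℝ[X]} {s : Set ℝ}

lemma isOpen (h : IsOpenIntervalBetweenRoots p s) : IsOpen s := by
  rcases h with ⟨a, _, rfl⟩ | ⟨a, _, rfl⟩ | ⟨a, b, _, _, _, rfl⟩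
  exacts [isOpen_Iio, isOpen_Ioi, isOpen_Ioo]

lemma ordConnected (h : IsOpenIntervalBetweenRoots p s) : s.OrdConnected := by
  rcases h with ⟨a, _, rfl⟩ | ⟨a, _, rfl⟩ | ⟨a, b, _, _, _, rfl⟩
  exacts [ordConnected_Iio, ordConnected_Ioi, ordConnected_Ioo]

lemma nonempty (h : IsOpenIntervalBetweenRoots p s) : s.Nonempty := by
  rcases h with ⟨a, _, rfl⟩ | ⟨a, _, rfl⟩ | ⟨a, b, hab, _, _, rfl⟩
  exacts [nonempty_Iio, nonempty_Ioi, nonempty_Ioo.2 hab]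

lemma mul_left (h : IsOpenIntervalBetweenRoots p s) (q : ℝ[X]) :
    IsOpenIntervalBetweenRoots (q * p) s := by
  rcases h with ⟨a, ha, rfl⟩ | ⟨a, ha, rfl⟩ | ⟨a, b, hab, ha, hb, rfl⟩
  · exact Or.inl ⟨a, root_mul_left_of_isRoot q ha, rfl⟩
  · exact Or.inr (Or.inl ⟨a, root_mul_left_of_isRoot q ha, rfl⟩)
  · exact Or.inr (Or.inr ⟨a, b, hab, root_mul_left_of_isRoot q ha,
      root_mul_left_of_isRoot q hb, rfl⟩)

lemma setIntegral_eq_zero (h : IsOpenIntervalBetweenRoots p s) :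
    ∫ x in s, (derivative p - X * p).eval x ∂(gaussianReal 0 1) = 0 := by
  rw [setIntegral_gaussianReal s h.isOpen.measurableSet]
  have hd := hasDerivAt_gaussianPDFReal_mul_eval p
  have hi := integrable_gaussianPDFReal_mul_eval p
  have hi' := integrable_gaussianPDFReal_mul_eval (derivative p - X * p)
  rcases h with ⟨a, ha, rfl⟩ | ⟨a, ha, rfl⟩ | ⟨a, b, hab, ha, hb, rfl⟩
  · rw [← integral_Iic_eq_integral_Iio, integral_Iic_of_hasDerivAt_of_tendsto'
      (fun x _ => hd x) hi'.integrableOn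
      (tendsto_zero_of_hasDerivAt_of_integrableOn_Iic (a := a) (fun x _ => hd x)
        hi'.integrableOn hi.integrableOn)]
    simp [ha.eq_zero]
  · rw [integral_Ioi_of_hasDerivAt_of_tendsto'
      (fun x _ => hd x) hi'.integrableOn
      (tendsto_zero_of_hasDerivAt_of_integrableOn_Ioi (a := a) (fun x _ => hd x)
        hi'.integrableOn hi.integrableOn)]
    simp [ha.eq_zero]
  · rw [← integral_Ioc_eq_integral_Ioo, ← intervalIntegral.integral_of_le hab.le,
      intervalIntegral.integral_eq_sub_of_hasDerivAt (fun x _ => hd x) hi'.intervalIntegrable]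
    simp [ha.eq_zero, hb.eq_zero]

end IsOpenIntervalBetweenRoots

lemma mul_eval_pos_of_ordConnected {p : ℝ[X]} {s : Set ℝ} (hs : s.OrdConnected)
    (h : ∀ x ∈ s, p.eval x ≠ 0) {x y : ℝ} (hx : x ∈ s) (hy : y ∈ s) :
    0 < p.eval x * p.eval y := by
  by_contra! hneg
  have h0 : (0 : ℝ) ∈ uIcc (p.eval x) (p.eval y) := by
    rw [mem_uIcc]
    rcases mul_nonpos_iff.1 hneg with h | h
    · exact Or.inr ⟨h.2, h.1⟩
    · exact Or.inl h
  obtain ⟨w, hw, hw0⟩ := intermediate_value_uIcc p.continuous.continuousOn h0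
  exact h w (hs.uIcc_subset hx hy hw) hw0

lemma setIntegral_gaussianReal_pos {g : ℝ → ℝ} {s : Set ℝ} (hs : IsOpen s) (hne : s.Nonempty)
    (hg : IntegrableOn g s (gaussianReal 0 1)) (hpos : ∀ x ∈ s, 0 < g x) :
    0 < ∫ x in s, g x ∂(gaussianReal 0 1) := by
  rw [setIntegral_pos_iff_support_of_nonneg_ae
    ((ae_restrict_mem hs.measurableSet).mono fun x hx => (hpos x hx).le) hg,
    inter_eq_self_of_subset_right (show s ⊆ Function.support g from fun x hx => (hpos x hx).ne')]
  refine pos_iff_ne_zero.2 fun h0 => ?_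
  exact (hs.measure_pos volume hne).ne' (gaussianReal_absolutelyContinuous' 0 one_ne_zero h0)

lemma IsOpenIntervalBetweenRoots.exists_root {p q : ℝ[X]} {s : Set ℝ}
    (h : IsOpenIntervalBetweenRoots p s) (hpq : derivative p = X * p - q) :
    ∃ z ∈ s, q.eval z = 0 := by
  by_contra! hq
  obtain ⟨w, hw⟩ := h.nonempty
  have h1 := setIntegral_gaussianReal_pos (g := fun x => q.eval w * q.eval x) h.isOpen h.nonempty
    ((integrable_eval_gaussianReal q).integrableOn.const_mul _)
    fun x hx => mul_eval_pos_of_ordConnected h.ordConnected hq hw hx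
  have h2 := h.setIntegral_eq_zero
  simp only [hpq, sub_sub_cancel_left, eval_neg, integral_neg, neg_eq_zero] at h2
  rw [integral_const_mul, h2, mul_zero] at h1
  exact h1.false

/-- If all integrals over compact subintervals around `z` are nonnegative, so is the integral. -/
lemma setIntegral_nonneg_of_forall_Icc {g : ℝ → ℝ} {s : Set ℝ} (hs : s.OrdConnected) {z : ℝ}
    (hz : z ∈ s) (hg : IntegrableOn g s)
    (h : ∀ c ∈ s, ∀ d ∈ s, c ≤ z → z ≤ d → 0 ≤ ∫ x in c..d, g x) : 0 ≤ ∫ x in s, g x := by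
  have : Nonempty s := ⟨⟨z, hz⟩⟩
  have hcover : AECover (volume.restrict s) ((atBot : Filter s) ×ˢ (atTop : Filter s))
      fun p => Icc (p.1 : ℝ) p.2 :=
    { ae_eventually_mem := (ae_restrict_mem hs.measurableSet).mono fun x hx =>
        (tendsto_fst.eventually (eventually_le_atBot (⟨x, hx⟩ : s))).and
          (tendsto_snd.eventually (eventually_ge_atTop (⟨x, hx⟩ : s)))
      measurableSet := fun _ => measurableSet_Icc }
  refine ge_of_tendsto (hcover.integral_tendsto_of_countably_generated hg) ?_
  filter_upwards [tendsto_fst.eventually (eventually_le_atBot (⟨z, hz⟩ : s)),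
    tendsto_snd.eventually (eventually_ge_atTop (⟨z, hz⟩ : s))] with p hc hd
  have hc' : (p.1 : ℝ) ≤ z := hc
  have hd' : z ≤ (p.2 : ℝ) := hd
  rw [Measure.restrict_restrict measurableSet_Icc,
    inter_eq_self_of_subset_left (hs.out p.1.2 p.2.2), integral_Icc_eq_integral_Ioc,
    ← intervalIntegral.integral_of_le (hc'.trans hd')]
  exact h _ p.1.2 _ p.2.2 hc' hd'

section Picone

variable {p q : ℝ[X]} {s : Set ℝ} {lam z : ℝ} {f f' : ℝ → ℝ}

lemma sub_mul_eval_pos (hs : s.OrdConnected) (hlam : 0 < lam) (hq : derivative q = C lam * p)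
    (hp : ∀ x ∈ s, p.eval x ≠ 0) (hz : z ∈ s) (hqz : q.eval z = 0) {x : ℝ} (hx : x ∈ s)
    (hxz : x ≠ z) : 0 < (x - z) * (p.eval x * q.eval x) := by
  have hd : ∀ y, HasDerivAt (fun y => q.eval y) (lam * p.eval y) y := fun y => by
    simpa [hq] using q.hasDerivAt y
  have key : ∃ w ∈ s, q.eval x = lam * p.eval w * (x - z) := by
    rcases hxz.lt_or_gt with hlt | hlt
    · obtain ⟨w, hw, he⟩ := exists_hasDerivAt_eq_slope _ _ hlt q.continuous.continuousOn
        fun y _ => hd y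
      refine ⟨w, hs.out hx hz (Ioo_subset_Icc_self hw), ?_⟩
      rw [eq_div_iff (sub_pos.2 hlt).ne', hqz] at he
      linarith
    · obtain ⟨w, hw, he⟩ := exists_hasDerivAt_eq_slope _ _ hlt q.continuous.continuousOn
        fun y _ => hd y
      refine ⟨w, hs.out hz hx (Ioo_subset_Icc_self hw), ?_⟩
      rw [eq_div_iff (sub_pos.2 hlt).ne', hqz] at he
      linarith
  obtain ⟨w, hw, he⟩ := key
  have := mul_eval_pos_of_ordConnected hs hp hx hw
  have h2 : 0 < (x - z) ^ 2 := by have := sub_ne_zero.2 hxz; positivity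
  calc 0 < lam * (p.eval x * p.eval w) * (x - z) ^ 2 := by positivity
    _ = _ := by rw [he]; ring

/-- The boundary term in the Picone identity for the eigenfunction `q` with derivative `lam * p`. -/
noncomputable def piconeFun (p q : ℝ[X]) (lam z : ℝ) (f : ℝ → ℝ) (x : ℝ) : ℝ :=
  (f x - f z) ^ 2 * (gaussianPDFReal 0 1 x * p.eval x) * lam / q.eval x

lemma hasDerivAt_piconeFun_self (hlam : 0 < lam) (hq : derivative q = C lam * p)
    (hpz : p.eval z ≠ 0) (hqz : q.eval z = 0) (hf : HasDerivAt f (f' z) z) :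
    HasDerivAt (piconeFun p q lam z f) (gaussianPDFReal 0 1 z * f' z ^ 2) z := by
  rw [hasDerivAt_iff_tendsto_slope] at hf ⊢
  have hdq : Tendsto (slope (fun y => q.eval y) z) (𝓝[≠] z) (𝓝 (lam * p.eval z)) := by
    rw [← hasDerivAt_iff_tendsto_slope]
    simpa [hq] using q.hasDerivAt z
  have hφ : Tendsto (fun x => gaussianPDFReal 0 1 x * p.eval x) (𝓝[≠] z)
      (𝓝 (gaussianPDFReal 0 1 z * p.eval z)) :=
    (hasDerivAt_gaussianPDFReal_mul_eval p z).continuousAt.tendsto.mono_left nhdsWithin_le_nhds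
  have hne : lam * p.eval z ≠ 0 := mul_ne_zero hlam.ne' hpz
  have := (((hf.pow 2).mul hφ).mul_const lam).div hdq hne
  convert this.congr' ?_ using 2
  · field_simp
  · filter_upwards [self_mem_nhdsWithin] with x hx
    have hx' : x - z ≠ 0 := sub_ne_zero.2 hx
    simp only [slope_def_field, piconeFun, hqz, Pi.div_apply, sub_zero, div_zero]
    by_cases h0 : q.eval x = 0
    · simp [h0]
    · field_simp

lemma hasDerivAt_piconeFun (hpq : derivative p = X * p - q) (hq : derivative q = C lam * p)
    {x : ℝ} (hqx : q.eval x ≠ 0) (hf : HasDerivAt f (f' x) x) :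
    HasDerivAt (piconeFun p q lam z f)
      (gaussianPDFReal 0 1 x * (f' x ^ 2 - lam * (f x - f z) ^ 2 -
        (f' x - (f x - f z) * (lam * p.eval x / q.eval x)) ^ 2)) x := by
  have hdq : HasDerivAt (fun y => q.eval y) (lam * p.eval x) x := by
    simpa [hq] using q.hasDerivAt x
  have hφ := hasDerivAt_gaussianPDFReal_mul_eval p x
  have := ((((hf.sub_const (f z)).pow 2).mul hφ).mul_const lam).div hdq hqx
  refine this.congr_deriv ?_
  simp only [hpq, Pi.mul_apply, Pi.pow_apply, sub_sub_cancel_left, eval_neg]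
  field_simp
  push_cast
  ring

/-- Poincaré inequality with constant `1 / lam`, centred at the zero `z` of the eigenfunction. -/
lemma setIntegral_sub_sq_le (hs : s.OrdConnected) (hlam : 0 < lam)
    (hpq : derivative p = X * p - q) (hq : derivative q = C lam * p)
    (hp : ∀ x ∈ s, p.eval x ≠ 0) (hz : z ∈ s) (hqz : q.eval z = 0)
    (hf : ∀ x ∈ s, HasDerivAt f (f' x) x)
    (hfi : IntegrableOn (fun x => (f x - f z) ^ 2) s (gaussianReal 0 1))
    (hfi' : IntegrableOn (fun x => f' x ^ 2) s (gaussianReal 0 1)) :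
    lam * ∫ x in s, (f x - f z) ^ 2 ∂(gaussianReal 0 1) ≤
      ∫ x in s, f' x ^ 2 ∂(gaussianReal 0 1) := by
  have hpos := fun x (hx : x ∈ s) (hxz : x ≠ z) => sub_mul_eval_pos hs hlam hq hp hz hqz hx hxz
  have hint : IntegrableOn (fun x => f' x ^ 2 - lam * (f x - f z) ^ 2) s (gaussianReal 0 1) :=
    hfi'.sub (hfi.const_mul lam)
  have hint' := (integrable_gaussianReal_iff s hs.measurableSet _).1 hint
  rw [← sub_nonneg, ← integral_const_mul, ← integral_sub hfi' (hfi.const_mul lam),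
    setIntegral_gaussianReal s hs.measurableSet]
  refine setIntegral_nonneg_of_forall_Icc hs hz hint' fun c hc d hd hcz hzd => ?_
  have hsub : Icc c d ⊆ s := hs.out hc hd
  have hderiv : ∀ x ∈ s, ∃ w, HasDerivAt (piconeFun p q lam z f) w x ∧
      w ≤ gaussianPDFReal 0 1 x * (f' x ^ 2 - lam * (f x - f z) ^ 2) := fun x hx => by
    rcases eq_or_ne x z with rfl | hxz
    · exact ⟨_, hasDerivAt_piconeFun_self hlam hq (hp _ hx) hqz (hf _ hx), by simp⟩
    · have hqx : q.eval x ≠ 0 := fun h0 => by simpa [h0] using hpos x hx hxz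
      refine ⟨_, hasDerivAt_piconeFun hpq hq hqx (hf x hx), ?_⟩
      exact mul_le_mul_of_nonneg_left (sub_le_self _ (sq_nonneg _)) (gaussianPDFReal_nonneg 0 1 x)
  choose! W hW hWle using hderiv
  have hle := intervalIntegral.sub_le_integral_of_hasDeriv_right_of_le (hcz.trans hzd)
    (fun x hx => (hW x (hsub hx)).continuousAt.continuousWithinAt)
    (fun x hx => (hW x (hsub (Ioo_subset_Icc_self hx))).hasDerivWithinAt)
    (hint'.mono_set hsub) (fun x hx => hWle x (hsub (Ioo_subset_Icc_self hx)))
  have hsign : ∀ x ∈ s, 0 ≤ (x - z) * piconeFun p q lam z f x := fun x hx => by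
    rcases eq_or_ne x z with rfl | hxz
    · simp
    · have hqx : q.eval x ≠ 0 := fun h0 => by simpa [h0] using hpos x hx hxz
      have h1 := gaussianPDFReal_nonneg 0 1 x
      have h2 := hpos x hx hxz
      have : (x - z) * piconeFun p q lam z f x = (f x - f z) ^ 2 * gaussianPDFReal 0 1 x * lam *
          ((x - z) * (p.eval x * q.eval x)) / q.eval x ^ 2 := by
        unfold piconeFun
        field_simp
      rw [this]
      positivity
  have hzero : piconeFun p q lam z f z = 0 := by simp [piconeFun]
  have hd0 : 0 ≤ piconeFun p q lam z f d := by
    rcases hzd.eq_or_lt with rfl | hlt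
    · exact hzero.ge
    · exact nonneg_of_mul_nonneg_right (hsign d hd) (sub_pos.2 hlt)
  have hc0 : piconeFun p q lam z f c ≤ 0 := by
    rcases hcz.eq_or_lt with rfl | hlt
    · exact hzero.le
    · exact nonpos_of_mul_nonneg_right (hsign c hc) (sub_neg.2 hlt)
  linarith

end Picone

section SpectralGap

variable {p q : ℝ[X]} {s : Set ℝ} {lam : ℝ} {c : ENNReal}

lemma Var_le (μ : Measure ℝ) (f : ℝ → ℝ) (a : ℝ) : Var μ f ≤ ∫ x, (f x - a) ^ 2 ∂μ :=
  ciInf_le ⟨0, forall_mem_range.2 fun _ => integral_nonneg fun _ => sq_nonneg _⟩ a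

lemma integral_sq_le_Var {μ : Measure ℝ} [IsFiniteMeasure μ] {f : ℝ → ℝ} (hf : MemLp f 2 μ)
    (h0 : ∫ x, f x ∂μ = 0) : ∫ x, f x ^ 2 ∂μ ≤ Var μ f := by
  refine le_ciInf fun a => ?_
  have h1 : Integrable f μ := hf.integrable one_le_two
  have h2 : Integrable (fun x => f x ^ 2) μ := hf.integrable_sq
  have h3 : ∀ x, (f x - a) ^ 2 = f x ^ 2 - 2 * a * f x + a ^ 2 := fun x => by ring
  simp only [h3]
  have h4 : Integrable (fun x => f x ^ 2 - 2 * a * f x) μ := h2.sub (h1.const_mul _)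
  rw [integral_add h4 (integrable_const _), integral_sub h2 (h1.const_mul _),
    integral_const_mul, h0, integral_const]
  have : 0 ≤ μ.real univ • a ^ 2 := smul_nonneg measureReal_nonneg (sq_nonneg a)
  linarith

theorem poincareOn_smul_restrict_gaussianReal (h : IsOpenIntervalBetweenRoots p s)
    (hlam : 0 < lam) (hpq : derivative p = X * p - q) (hq : derivative q = C lam * p)
    (hp : ∀ x ∈ s, p.eval x ≠ 0) (hc : c ≠ 0) (hc' : c ≠ ⊤) :
    PoincareOn (c • (gaussianReal 0 1).restrict s) s (1 / lam) := by
  intro f f' hf hf2 hf'2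
  rw [integrable_smul_measure hc hc'] at hf2 hf'2
  obtain ⟨z, hz, hqz⟩ := h.exists_root hpq
  have hmeas : AEStronglyMeasurable f ((gaussianReal 0 1).restrict s) :=
    ContinuousOn.aestronglyMeasurable (fun x hx => (hf x hx).continuousAt.continuousWithinAt)
      h.isOpen.measurableSet
  have hfi : Integrable (fun x => (f x - f z) ^ 2) ((gaussianReal 0 1).restrict s) :=
    (((memLp_two_iff_integrable_sq hmeas).2 hf2).sub (memLp_const (f z))).integrable_sq
  have hmain := setIntegral_sub_sq_le h.ordConnected hlam hpq hq hp hz hqz hf hfi hf'2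
  refine (Var_le _ f (f z)).trans ?_
  simp only [integral_smul_measure, smul_eq_mul]
  rw [one_div_mul_eq_div, le_div_iff₀ hlam]
  have := mul_le_mul_of_nonneg_left hmain c.toReal_nonneg
  linarith

theorem one_div_le_of_poincareOn_smul_restrict_gaussianReal (h : IsOpenIntervalBetweenRoots p s)
    (hlam : 0 < lam) (hpq : derivative p = X * p - q) (hq : derivative q = C lam * p)
    (hp : ∀ x ∈ s, p.eval x ≠ 0) (hc : c ≠ 0) (hc' : c ≠ ⊤) {K : ℝ}
    (hK : PoincareOn (c • (gaussianReal 0 1).restrict s) s K) : 1 / lam ≤ K := by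
  have hint : ∀ r : ℝ[X], Integrable (fun x => r.eval x) (c • (gaussianReal 0 1).restrict s) :=
    fun r => (integrable_eval_gaussianReal r).integrableOn.smul_measure hc'
  have hintsq : ∀ r : ℝ[X],
      Integrable (fun x => r.eval x ^ 2) (c • (gaussianReal 0 1).restrict s) := fun r =>
    (hint (r ^ 2)).congr (ae_of_all _ fun _ => eval_pow 2)
  have : IsFiniteMeasure (c • (gaussianReal 0 1).restrict s) :=
    Measure.smul_finite _ hc'
  have hmem : MemLp (fun x => q.eval x) 2 (c • (gaussianReal 0 1).restrict s) :=
    (memLp_two_iff_integrable_sq (by fun_prop)).2 (hintsq q)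
  have hmean : ∫ x, q.eval x ∂(c • (gaussianReal 0 1).restrict s) = 0 := by
    have := h.setIntegral_eq_zero
    simp only [hpq, sub_sub_cancel_left, eval_neg, integral_neg, neg_eq_zero] at this
    rw [integral_smul_measure, this, smul_zero]
  have hparts : ∫ x, q.eval x ^ 2 ∂(c • (gaussianReal 0 1).restrict s) =
      lam * ∫ x, p.eval x ^ 2 ∂(c • (gaussianReal 0 1).restrict s) := by
    have h1 := (h.mul_left q).setIntegral_eq_zero
    have h2 : derivative (q * p) - X * (q * p) = C lam * p ^ 2 - q ^ 2 := by
      rw [derivative_mul, hpq, hq]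
      ring
    simp only [h2, eval_sub, eval_mul, eval_C, eval_pow] at h1
    have hp2 := (integrable_eval_gaussianReal (p ^ 2)).integrableOn (s := s)
    have hq2 := (integrable_eval_gaussianReal (q ^ 2)).integrableOn (s := s)
    simp only [eval_pow] at hp2 hq2
    rw [integral_sub (hp2.const_mul lam) hq2, integral_const_mul] at h1
    rw [integral_smul_measure, integral_smul_measure, smul_eq_mul, smul_eq_mul]
    linear_combination -c.toReal * h1
  have hpos : 0 < ∫ x, p.eval x ^ 2 ∂(c • (gaussianReal 0 1).restrict s) := by
    rw [integral_smul_measure, smul_eq_mul]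
    refine mul_pos (ENNReal.toReal_pos hc hc') (setIntegral_gaussianReal_pos h.isOpen h.nonempty
      ?_ fun x hx => ?_)
    · exact (integrable_eval_gaussianReal (p ^ 2)).integrableOn.congr
        (ae_of_all _ fun _ => eval_pow 2)
    · have := hp x hx
      positivity
  have hle := (integral_sq_le_Var hmem hmean).trans
    (hK (fun x => q.eval x) (fun x => lam * p.eval x)
      (fun x _ => by simpa [hq] using q.hasDerivAt x) (hintsq q)
      (by simpa [mul_pow] using (hintsq p).const_mul (lam ^ 2)))
  simp only [mul_pow] at hle
  rw [integral_const_mul, hparts] at hle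
  rw [div_le_iff₀ hlam]
  set A := ∫ x, p.eval x ^ 2 ∂(c • (gaussianReal 0 1).restrict s)
  have hA : 0 < lam * A := mul_pos hlam hpos
  refine le_of_mul_le_mul_right ?_ hA
  linarith

end SpectralGap

end

open Polynomial in
open ProbabilityTheory in
/-- the Gaussian restricted to an interval delimited by consecutive roots of the
`n`-th Hermite polynomial (or `±∞`) has Neumann spectral gap `n+1`, i.e. optimal Poincaré
constant `1/(n+1)`. -/
theorem stmt14 (n : ℕ) (hn : 1 ≤ n) (x : Fin n → ℝ) (hmono : StrictMono x)
    (hroots : ∀ y : ℝ, (Polynomial.aeval y (Polynomial.hermite n) = (0:ℝ)) ↔ ∃ i, y = x i)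
    (I : Set ℝ)
    (hI : I = Set.Iic (x ⟨0, hn⟩) ∨ I = Set.Ici (x ⟨n - 1, by omega⟩) ∨
      ∃ i j : Fin n, (j : ℕ) = (i : ℕ) + 1 ∧ I = Set.Icc (x i) (x j))
    (γI : Measure ℝ)
    (hγ : γI = ((gaussianReal 0 1) I)⁻¹ • (gaussianReal 0 1).restrict I) :
    PoincareOn γI (interior I) (1 / (n + 1)) ∧
    (∀ C, 0 ≤ C → PoincareOn γI (interior I) C → 1 / ((n : ℝ) + 1) ≤ C) := by
  set p : ℝ[X] := (hermite n).map (Int.castRingHom ℝ) with hp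
  set q : ℝ[X] := (hermite (n + 1)).map (Int.castRingHom ℝ) with hq
  have hpq : derivative p = X * p - q := by
    simp [hp, hq, hermite_succ]
  have hqd : derivative q = C ((n : ℝ) + 1) * p := by
    rw [hq, derivative_map, derivative_hermite_succ]
    simp [hp]
  have hroot : ∀ y, p.eval y = 0 ↔ ∃ i, y = x i := fun y => by
    rw [← hroots y, hp, eval_map, aeval_def, algebraMap_int_eq]
  have hroot' : ∀ i, p.IsRoot (x i) := fun i => (hroot _).2 ⟨i, rfl⟩
  have hlam : (0 : ℝ) < n + 1 := by positivity
  have hIint : I =ᵐ[gaussianReal 0 1] interior I := by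
    refine (gaussianReal_absolutelyContinuous 0 one_ne_zero).ae_eq ?_
    rcases hI with rfl | rfl | ⟨i, j, -, rfl⟩
    · rw [interior_Iic]; exact Iio_ae_eq_Iic.symm
    · rw [interior_Ici]; exact Ioi_ae_eq_Ici.symm
    · rw [interior_Icc]; exact Ioo_ae_eq_Icc.symm
  have hs : IsOpenIntervalBetweenRoots p (interior I) := by
    rcases hI with rfl | rfl | ⟨i, j, hij, rfl⟩
    · exact Or.inl ⟨_, hroot' _, interior_Iic⟩
    · exact Or.inr (Or.inl ⟨_, hroot' _, interior_Ici⟩)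
    · exact Or.inr (Or.inr ⟨_, _, hmono (Fin.lt_def.2 (by omega)), hroot' _, hroot' _,
        interior_Icc⟩)
  have hne : ∀ y ∈ interior I, p.eval y ≠ 0 := fun y hy h0 => by
    obtain ⟨k, rfl⟩ := (hroot y).1 h0
    rcases hI with rfl | rfl | ⟨i, j, hij, rfl⟩
    · rw [interior_Iic, mem_Iio, hmono.lt_iff_lt, Fin.lt_def] at hy
      simp at hy
    · rw [interior_Ici, mem_Ioi, hmono.lt_iff_lt, Fin.lt_def] at hy
      have := k.2
      simp only at hy
      omega
    · rw [interior_Icc, mem_Ioo, hmono.lt_iff_lt, hmono.lt_iff_lt, Fin.lt_def, Fin.lt_def] at hy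
      omega
  have hc : ((gaussianReal 0 1) I)⁻¹ ≠ 0 := ENNReal.inv_ne_zero.2 (measure_ne_top _ _)
  have hc' : ((gaussianReal 0 1) I)⁻¹ ≠ ⊤ := by
    refine ENNReal.inv_ne_top.2 fun h0 => ?_
    rw [measure_congr hIint] at h0
    exact (hs.isOpen.measure_pos volume hs.nonempty).ne'
      (gaussianReal_absolutelyContinuous' 0 one_ne_zero h0)
  rw [Measure.restrict_congr_set hIint] at hγ
  subst hγ
  exact ⟨poincareOn_smul_restrict_gaussianReal hs hlam hpq hqd hne hc hc', fun K _ hK =>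
    one_div_le_of_poincareOn_smul_restrict_gaussianReal hs hlam hpq hqd hne hc hc' hK⟩
end

section
/- Let μ be a probability measure on ℝ with dμ(x) = e^{−V(x)} 1_Ω(x) dx on an open interval Ω, with V twice continuously differentiable. If there exists r > 0 such that V''(x) ≥ r for all x ∈ Ω, then C_P(μ) ≤ 1/r. -/
open MeasureTheory Real Set

/-- One-sided weighted Poincaré inequality on a compact interval, based at an endpoint where the
potential is nondecreasing. -/
theorem integral_sq_sub_left_le {c d r : ℝ} (hcd : c ≤ d) (hr : 0 < r) {V V' V'' f f' : ℝ → ℝ}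
    (hV' : ∀ x ∈ Icc c d, HasDerivAt V (V' x) x)
    (hV'' : ∀ x ∈ Icc c d, HasDerivAt V' (V'' x) x)
    (hconv : ∀ x ∈ Icc c d, r ≤ V'' x) (hc : 0 ≤ V' c)
    (hf : ∀ x ∈ Icc c d, HasDerivAt f (f' x) x)
    (hint : IntegrableOn (fun x => f' x ^ 2 * exp (-V x)) (Icc c d)) :
    ∫ x in c..d, (f x - f c) ^ 2 * exp (-V x) ≤ 1 / r * ∫ x in c..d, f' x ^ 2 * exp (-V x) := by
  have hcV : ContinuousOn V (Icc c d) := fun x hx => (hV' x hx).continuousAt.continuousWithinAt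
  have hcV' : ContinuousOn V' (Icc c d) := fun x hx => (hV'' x hx).continuousAt.continuousWithinAt
  have hcf : ContinuousOn f (Icc c d) := fun x hx => (hf x hx).continuousAt.continuousWithinAt
  have hcmem : c ∈ Icc c d := left_mem_Icc.2 hcd
  have hgrow : ∀ x ∈ Icc c d, r * (x - c) ≤ V' x - V' c := fun x hx =>
    (convex_Icc c d).mul_sub_le_image_sub_of_le_deriv hcV'
      (fun y hy => (hV'' y (interior_subset hy)).differentiableAt.differentiableWithinAt)
      (fun y hy => (hV'' y (interior_subset hy)).deriv ▸ hconv y (interior_subset hy))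
      c hcmem x hx hx.1
  have hgpos : ∀ x ∈ Ioc c d, 0 < V' x - V' c := fun x hx =>
    (mul_pos hr (sub_pos.2 hx.1)).trans_le (hgrow x (Ioc_subset_Icc_self hx))
  set H : ℝ → ℝ := fun x => (f x - f c) ^ 2 / (V' x - V' c) * exp (-V x) with hH
  have hH0 : H c = 0 := by simp [hH]
  have hHnonneg : ∀ x ∈ Icc c d, 0 ≤ H x := fun x hx =>
    mul_nonneg (div_nonneg (sq_nonneg _)
      ((mul_nonneg hr.le (sub_nonneg.2 hx.1)).trans (hgrow x hx))) (exp_pos _).le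
  have hHcont : ContinuousOn H (Icc c d) := by
    intro x hx
    rcases hx.1.eq_or_lt with rfl | hlt
    · set B : ℝ → ℝ := fun x => dslope f c x ^ 2 * (x - c) / r * exp (-V x) with hB
      have hBc : ContinuousAt B c := by
        have h1 : ContinuousAt (dslope f c) c :=
          continuousAt_dslope_same.2 (hf c hcmem).differentiableAt
        have h2 : ContinuousAt V c := (hV' c hcmem).continuousAt
        fun_prop
      have hB0 : B c = 0 := by simp [hB]
      have hHB : ∀ x ∈ Icc c d, H x ≤ B x := by
        intro x hx
        rcases hx.1.eq_or_lt with rfl | hlt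
        · rw [hH0, hB0]
        have hxc : 0 < x - c := sub_pos.2 hlt
        have hs : f x - f c = (x - c) * dslope f c x := (sub_smul_dslope f c x).symm
        refine mul_le_mul_of_nonneg_right ?_ (exp_pos _).le
        rw [hs, div_le_div_iff₀ (hgpos x ⟨hlt, hx.2⟩) hr]
        have := mul_le_mul_of_nonneg_left (hgrow x hx)
          (mul_nonneg (sq_nonneg (dslope f c x)) hxc.le)
        nlinarith [this]
      rw [ContinuousWithinAt, hH0]
      refine tendsto_of_tendsto_of_tendsto_of_le_of_le' tendsto_const_nhds
        (hB0 ▸ hBc.continuousWithinAt.tendsto)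
        (eventually_mem_nhdsWithin.mono hHnonneg) (eventually_mem_nhdsWithin.mono hHB)
    · exact (((((hcf x hx).sub continuousWithinAt_const).pow 2).div
        ((hcV' x hx).sub continuousWithinAt_const) (hgpos x ⟨hlt, hx.2⟩).ne').mul
          (hcV x hx).neg.rexp)
  have hucont : ContinuousOn (fun x => (f x - f c) ^ 2 * exp (-V x)) (Icc c d) := by fun_prop
  have huint : IntegrableOn (fun x => (f x - f c) ^ 2 * exp (-V x)) (Icc c d) :=
    hucont.integrableOn_Icc
  have key := intervalIntegral.sub_le_integral_of_hasDeriv_right_of_le hcd hHcont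
    (g' := fun x => ((2 * (f x - f c) * f' x) * (V' x - V' c) - (f x - f c) ^ 2 * V'' x) /
        (V' x - V' c) ^ 2 * exp (-V x) +
        (f x - f c) ^ 2 / (V' x - V' c) * (exp (-V x) * (-V' x)))
    (φ := fun x => 1 / r * (f' x ^ 2 * exp (-V x)) - (f x - f c) ^ 2 * exp (-V x))
    (fun x hx => by
      have hx' := Ioo_subset_Icc_self hx
      have h := ((((hf x hx').sub_const (f c)).pow 2).div ((hV'' x hx').sub_const (V' c))
        (hgpos x (Ioo_subset_Ioc_self hx)).ne').mul (hV' x hx').neg.exp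
      refine (h.congr_deriv ?_).hasDerivWithinAt
      simp)
    (show IntegrableOn ((fun x => 1 / r * (f' x ^ 2 * exp (-V x))) -
      fun x => (f x - f c) ^ 2 * exp (-V x)) (Icc c d) volume from
        Integrable.sub (hint.const_mul (1 / r)) huint)
    (fun x hx => by
      have hx' := Ioo_subset_Icc_self hx
      have hg := hgpos x (Ioo_subset_Ioc_self hx)
      have hvr := hconv x hx'
      generalize hgd : V' x - V' c = g at *
      have hVx : V' x = g + V' c := by linarith
      generalize f x - f c = u
      have he := exp_pos (-V x)
      have h1 : (2 * u * f' x * g - u ^ 2 * V'' x) / g ^ 2 ≤ 1 / r * f' x ^ 2 := by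
        rw [div_le_iff₀ (by positivity), one_div, inv_mul_eq_div, div_mul_eq_mul_div,
          le_div_iff₀ hr]
        nlinarith [sq_nonneg (f' x * g - r * u),
          mul_nonneg (mul_nonneg (sq_nonneg u) hr.le) (sub_nonneg.2 hvr)]
      have h2 : u ^ 2 ≤ u ^ 2 / g * V' x := by
        rw [hVx, div_mul_eq_mul_div, le_div_iff₀ hg]
        nlinarith [mul_nonneg (sq_nonneg u) hc]
      have := mul_le_mul_of_nonneg_right h1 he.le
      have := mul_le_mul_of_nonneg_right h2 he.le
      linarith)
  rw [intervalIntegral.integral_sub, intervalIntegral.integral_const_mul, hH0] at key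
  · linarith [hHnonneg d (right_mem_Icc.2 hcd)]
  · exact ((intervalIntegrable_iff_integrableOn_Icc_of_le hcd).2 hint).const_mul _
  · exact (intervalIntegrable_iff_integrableOn_Icc_of_le hcd).2 huint

/-- Mirror image of `integral_sq_sub_left_le`. -/
theorem integral_sq_sub_right_le {c d r : ℝ} (hcd : c ≤ d) (hr : 0 < r) {V V' V'' f f' : ℝ → ℝ}
    (hV' : ∀ x ∈ Icc c d, HasDerivAt V (V' x) x)
    (hV'' : ∀ x ∈ Icc c d, HasDerivAt V' (V'' x) x)
    (hconv : ∀ x ∈ Icc c d, r ≤ V'' x) (hd : V' d ≤ 0)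
    (hf : ∀ x ∈ Icc c d, HasDerivAt f (f' x) x)
    (hint : IntegrableOn (fun x => f' x ^ 2 * exp (-V x)) (Icc c d)) :
    ∫ x in c..d, (f x - f d) ^ 2 * exp (-V x) ≤ 1 / r * ∫ x in c..d, f' x ^ 2 * exp (-V x) := by
  have hmem : ∀ x ∈ Icc (-d) (-c), -x ∈ Icc c d := fun x hx =>
    ⟨le_neg.1 hx.2, neg_le.1 hx.1⟩
  have hint' : IntegrableOn (fun x => (-f' (-x)) ^ 2 * exp (-V (-x))) (Icc (-d) (-c)) := by
    rw [← intervalIntegrable_iff_integrableOn_Icc_of_le (neg_le_neg hcd)]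
    have h := (IntervalIntegrable.iff_comp_neg (f := fun x => f' x ^ 2 * exp (-V x))).1
      ((intervalIntegrable_iff_integrableOn_Icc_of_le hcd).2 hint)
    simpa using h.symm
  have h := integral_sq_sub_left_le (neg_le_neg hcd) hr (V := fun x => V (-x))
    (V' := fun x => -V' (-x)) (V'' := fun x => V'' (-x)) (f := fun x => f (-x))
    (f' := fun x => -f' (-x))
    (fun x hx => by simpa [Function.comp_def] using (hV' _ (hmem x hx)).comp x (hasDerivAt_neg x))
    (fun x hx => by
      simpa [Function.comp_def, Pi.neg_def] using
        ((hV'' _ (hmem x hx)).comp x (hasDerivAt_neg x)).neg)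
    (fun x hx => hconv _ (hmem x hx)) (by simpa using hd)
    (fun x hx => by simpa [Function.comp_def] using (hf _ (hmem x hx)).comp x (hasDerivAt_neg x))
    hint'
  simp only [neg_neg, neg_sq] at h
  rwa [intervalIntegral.integral_comp_neg (fun x => (f x - f d) ^ 2 * exp (-V x)),
    intervalIntegral.integral_comp_neg (fun x => f' x ^ 2 * exp (-V x)), neg_neg, neg_neg] at h

/-- Weighted Poincaré inequality on a compact interval. -/
theorem exists_integral_sq_sub_le {c d r : ℝ} (hcd : c ≤ d) (hr : 0 < r) {V V' V'' f f' : ℝ → ℝ}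
    (hV' : ∀ x ∈ Icc c d, HasDerivAt V (V' x) x)
    (hV'' : ∀ x ∈ Icc c d, HasDerivAt V' (V'' x) x)
    (hconv : ∀ x ∈ Icc c d, r ≤ V'' x)
    (hf : ∀ x ∈ Icc c d, HasDerivAt f (f' x) x)
    (hint : IntegrableOn (fun x => f' x ^ 2 * exp (-V x)) (Icc c d)) :
    ∃ a, ∫ x in c..d, (f x - a) ^ 2 * exp (-V x) ≤
      1 / r * ∫ x in c..d, f' x ^ 2 * exp (-V x) := by
  have hcV : ContinuousOn V (Icc c d) := fun x hx => (hV' x hx).continuousAt.continuousWithinAt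
  have hcV' : ContinuousOn V' (Icc c d) := fun x hx => (hV'' x hx).continuousAt.continuousWithinAt
  have hcf : ContinuousOn f (Icc c d) := fun x hx => (hf x hx).continuousAt.continuousWithinAt
  by_cases hc : 0 ≤ V' c
  · exact ⟨f c, integral_sq_sub_left_le hcd hr hV' hV'' hconv hc hf hint⟩
  by_cases hd : V' d ≤ 0
  · exact ⟨f d, integral_sq_sub_right_le hcd hr hV' hV'' hconv hd hf hint⟩
  push Not at hc hd
  obtain ⟨p, hp, hp0⟩ := intermediate_value_Icc hcd hcV' ⟨hc.le, hd.le⟩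
  have hl : Icc c p ⊆ Icc c d := Icc_subset_Icc_right hp.2
  have hr' : Icc p d ⊆ Icc c d := Icc_subset_Icc_left hp.1
  have h1 := integral_sq_sub_right_le hp.1 hr (fun x hx => hV' x (hl hx))
    (fun x hx => hV'' x (hl hx)) (fun x hx => hconv x (hl hx)) hp0.le
    (fun x hx => hf x (hl hx)) (hint.mono_set hl)
  have h2 := integral_sq_sub_left_le hp.2 hr (fun x hx => hV' x (hr' hx))
    (fun x hx => hV'' x (hr' hx)) (fun x hx => hconv x (hr' hx)) hp0.ge
    (fun x hx => hf x (hr' hx)) (hint.mono_set hr')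
  have hucont : ContinuousOn (fun x => (f x - f p) ^ 2 * exp (-V x)) (Icc c d) := by fun_prop
  refine ⟨f p, ?_⟩
  rw [← intervalIntegral.integral_add_adjacent_intervals
      ((hucont.mono hl).intervalIntegrable_of_Icc hp.1)
      ((hucont.mono hr').intervalIntegrable_of_Icc hp.2),
    ← intervalIntegral.integral_add_adjacent_intervals
      ((intervalIntegrable_iff_integrableOn_Icc_of_le hp.1).2 (hint.mono_set hl))
      ((intervalIntegrable_iff_integrableOn_Icc_of_le hp.2).2 (hint.mono_set hr'))]
  linarith

/-- A nonempty open interval is exhausted by compact intervals. -/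
theorem exists_seq_Icc_subset {Ω : Set ℝ} (hΩo : IsOpen Ω) (hΩc : Ω.OrdConnected)
    (hΩne : Ω.Nonempty) :
    ∃ c d : ℕ → ℝ, (∀ n, c n ≤ d n) ∧ (∀ n, Icc (c n) (d n) ⊆ Ω) ∧
      ∀ x ∈ Ω, ∀ᶠ n in Filter.atTop, x ∈ Icc (c n) (d n) := by
  have : Nonempty Ω := hΩne.to_subtype
  set q : ℕ → ℝ := fun n => (TopologicalSpace.denseSeq Ω n : ℝ) with hq
  have hqmem : ∀ n, q n ∈ Ω := fun n => (TopologicalSpace.denseSeq Ω n).2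
  have hdense : ∀ U : Set ℝ, IsOpen U → (Ω ∩ U).Nonempty → ∃ n, q n ∈ U := by
    rintro U hU ⟨x, hx, hxU⟩
    obtain ⟨-, hy, n, rfl⟩ := (TopologicalSpace.denseRange_denseSeq Ω).inter_open_nonempty
      (Subtype.val ⁻¹' U) (hU.preimage continuous_subtype_val) ⟨⟨x, hx⟩, hxU⟩
    exact ⟨n, hy⟩
  have hne : ∀ n, (Finset.range (n + 1)).Nonempty := fun n => Finset.nonempty_range_add_one
  refine ⟨fun n => (Finset.range (n + 1)).inf' (hne n) q,
    fun n => (Finset.range (n + 1)).sup' (hne n) q, fun n => ?_, fun n => ?_, fun x hx => ?_⟩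
  · exact (Finset.inf'_le q (Finset.self_mem_range_succ n)).trans
      (Finset.le_sup' q (Finset.self_mem_range_succ n))
  · obtain ⟨i, -, hi⟩ := Finset.exists_mem_eq_inf' (hne n) q
    obtain ⟨j, -, hj⟩ := Finset.exists_mem_eq_sup' (hne n) q
    simp only [hi, hj]
    exact hΩc.out (hqmem i) (hqmem j)
  · obtain ⟨l, u, hxlu, hlu⟩ := mem_nhds_iff_exists_Ioo_subset.1 (hΩo.mem_nhds hx)
    obtain ⟨y, hy⟩ := exists_between hxlu.1
    obtain ⟨z, hz⟩ := exists_between hxlu.2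
    obtain ⟨i, hi⟩ := hdense (Iio x) isOpen_Iio ⟨y, hlu ⟨hy.1, hy.2.trans hxlu.2⟩, hy.2⟩
    obtain ⟨j, hj⟩ := hdense (Ioi x) isOpen_Ioi ⟨z, hlu ⟨hxlu.1.trans hz.1, hz.2⟩, hz.1⟩
    filter_upwards [Filter.eventually_ge_atTop i, Filter.eventually_ge_atTop j] with n hni hnj
    exact ⟨(Finset.inf'_le q (Finset.mem_range.2 (by omega))).trans (le_of_lt hi),
      (le_of_lt hj).trans (Finset.le_sup' q (Finset.mem_range.2 (by omega)))⟩

/-- Bakry–Émery criterion in dimension one: if `V'' ≥ r > 0` on `Ω`, the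
measure `e^{-V} 1_Ω dx` satisfies a Poincaré inequality with constant `1/r`. -/
theorem stmt18 (Ω : Set ℝ) (hΩo : IsOpen Ω) (hΩc : Ω.OrdConnected) (hΩne : Ω.Nonempty)
    (V V' V'' : ℝ → ℝ)
    (hV' : ∀ x ∈ Ω, HasDerivAt V (V' x) x)
    (hV'' : ∀ x ∈ Ω, HasDerivAt V' (V'' x) x)
    (hV''c : ContinuousOn V'' Ω)
    (μ : Measure ℝ)
    (hμ : μ = MeasureTheory.volume.withDensity fun x =>
      ENNReal.ofReal (Set.indicator Ω (fun y => Real.exp (-(V y))) x))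
    [IsProbabilityMeasure μ]
    (r : ℝ) (hr : 0 < r) (hconv : ∀ x ∈ Ω, r ≤ V'' x) :
    PoincareOn μ Ω (1/r) := by
  intro f f' hf hfi hf'i
  have hcV : ContinuousOn V Ω := fun x hx => (hV' x hx).continuousAt.continuousWithinAt
  have hcf : ContinuousOn f Ω := fun x hx => (hf x hx).continuousAt.continuousWithinAt
  set ρ : ℝ → ℝ := Ω.indicator fun y => exp (-V y) with hρ
  have hρm : Measurable ρ := by
    classical
    have := (hcV.neg.rexp).measurable_piecewise (g := fun _ => (0 : ℝ)) continuousOn_const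
      hΩo.measurableSet
    rw [hρ, ← piecewise_eq_indicator]
    exact this
  have hρ0 : ∀ x, 0 ≤ ρ x := fun x => indicator_nonneg (fun y _ => (exp_pos _).le) x
  have hint : ∀ g : ℝ → ℝ, Integrable g μ → Integrable (fun x => g x * ρ x) := by
    intro g hg
    rw [hμ, integrable_withDensity_iff hρm.ennreal_ofReal (by simp)] at hg
    simpa only [ENNReal.toReal_ofReal (hρ0 _)] using hg
  have hset : ∀ (g : ℝ → ℝ) {c d : ℝ}, c ≤ d → Icc c d ⊆ Ω →
      ∫ x in Icc c d, g x ∂μ = ∫ x in c..d, g x * exp (-V x) := by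
    intro g c d hcd hsub
    rw [intervalIntegral.integral_of_le hcd, ← integral_Icc_eq_integral_Ioc, hμ,
      setIntegral_withDensity_eq_setIntegral_toReal_smul hρm.ennreal_ofReal (by simp) g
        measurableSet_Icc]
    refine setIntegral_congr_fun measurableSet_Icc fun x hx => ?_
    simp only [ENNReal.toReal_ofReal (hρ0 _), smul_eq_mul]
    rw [hρ, indicator_of_mem (hsub hx), mul_comm]
  have hμΩ : ∀ᵐ x ∂μ, x ∈ Ω := by
    rw [hμ, ae_withDensity_iff hρm.ennreal_ofReal]
    refine Filter.Eventually.of_forall fun x hx => ?_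
    by_contra hxΩ
    exact hx (by simp [hρ, hxΩ])
  have hfm : AEStronglyMeasurable f μ := by
    have := hcf.aestronglyMeasurable (μ := μ) hΩo.measurableSet
    rwa [Measure.restrict_eq_self_of_ae_mem hμΩ] at this
  have hf1 : Integrable f μ := ((memLp_two_iff_integrable_sq hfm).2 hfi).integrable one_le_two
  have hexp : ∀ (ν : Measure ℝ) [IsFiniteMeasure ν] (a : ℝ), Integrable f ν →
      Integrable (fun x => f x ^ 2) ν → ∫ x, (f x - a) ^ 2 ∂ν =
        ∫ x, f x ^ 2 ∂ν - 2 * a * ∫ x, f x ∂ν + a ^ 2 * ∫ _, (1 : ℝ) ∂ν := by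
    intro ν _ a h1 h2
    rw [← integral_const_mul, ← integral_const_mul, ← integral_sub h2 (h1.const_mul _),
      ← integral_add (f := fun x => f x ^ 2 - 2 * a * f x) (h2.sub (h1.const_mul _))
        ((integrable_const _).const_mul _)]
    congr 1 with x
    ring
  obtain ⟨c, d, hcd, hsub, hev⟩ := exists_seq_Icc_subset hΩo hΩc hΩne
  have hcover : AECover μ Filter.atTop fun n => Icc (c n) (d n) :=
    ⟨hμΩ.mono hev, fun _ => measurableSet_Icc⟩
  have hA := hcover.integral_tendsto_of_countably_generated hfi
  have hB := hcover.integral_tendsto_of_countably_generated hf1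
  have hM := hcover.integral_tendsto_of_countably_generated (integrable_const (1 : ℝ))
  set K := 1 / r * ∫ x, f' x ^ 2 ∂μ with hK
  have hle : ∀ n, (∫ x in Icc (c n) (d n), f x ^ 2 ∂μ) * (∫ _ in Icc (c n) (d n), (1 : ℝ) ∂μ) -
      (∫ x in Icc (c n) (d n), f x ∂μ) ^ 2 ≤ K * ∫ _ in Icc (c n) (d n), (1 : ℝ) ∂μ := by
    intro n
    have hi : IntegrableOn (fun x => f' x ^ 2 * exp (-V x)) (Icc (c n) (d n)) := by
      refine (hint _ hf'i).integrableOn.congr_fun (fun x hx => ?_) measurableSet_Icc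
      simp only [hρ, indicator_of_mem (hsub n hx)]
    obtain ⟨a, ha⟩ := exists_integral_sq_sub_le (hcd n) hr (fun x hx => hV' x (hsub n hx))
      (fun x hx => hV'' x (hsub n hx)) (fun x hx => hconv x (hsub n hx))
      (fun x hx => hf x (hsub n hx)) hi
    rw [← hset (fun x => (f x - a) ^ 2) (hcd n) (hsub n),
      ← hset (fun x => f' x ^ 2) (hcd n) (hsub n),
      hexp _ a hf1.integrableOn hfi.integrableOn] at ha
    have hK' : 1 / r * ∫ x in Icc (c n) (d n), f' x ^ 2 ∂μ ≤ K :=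
      mul_le_mul_of_nonneg_left (setIntegral_le_integral hf'i
        (Filter.Eventually.of_forall fun x => sq_nonneg _)) (by positivity)
    have hM0 : 0 ≤ ∫ _ in Icc (c n) (d n), (1 : ℝ) ∂μ := integral_nonneg fun _ => zero_le_one
    have := mul_le_mul_of_nonneg_right (ha.trans hK') hM0
    nlinarith [sq_nonneg ((∫ x in Icc (c n) (d n), f x ∂μ) -
      a * ∫ _ in Icc (c n) (d n), (1 : ℝ) ∂μ)]
  have hlim := le_of_tendsto_of_tendsto' ((hA.mul hM).sub (hB.pow 2)) (hM.const_mul K) hle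
  have h1 : ∫ _, (1 : ℝ) ∂μ = 1 := by simp
  rw [h1, mul_one, mul_one] at hlim
  have hbdd : BddBelow (range fun a : ℝ => ∫ x, (f x - a) ^ 2 ∂μ) :=
    ⟨0, by rintro - ⟨a, rfl⟩; exact integral_nonneg fun x => sq_nonneg _⟩
  calc Var μ f ≤ ∫ x, (f x - ∫ y, f y ∂μ) ^ 2 ∂μ := ciInf_le hbdd _
    _ = ∫ x, f x ^ 2 ∂μ - (∫ x, f x ∂μ) ^ 2 := by rw [hexp μ _ hf1 hfi, h1]; ring
    _ ≤ K := hlim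
end
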